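/- arXiv:2407.21175 — 6 statements merged into one kernel-verified Lean document; each statement's English description precedes it below -/
import Mathlib

section
/- The ring Z(n) is semiprime: for every nonzero element a of Z(n) there exists r ∈ Z(n) such that a·r·a ≠ 0. -/
/-- Index type for the generators `z_{i,j}`, `1 ≤ i < j ≤ n`. -/
abbrev ZIdx (n : ℕ) := {p : ℕ × ℕ // 1 ≤ p.1 ∧ p.1 < p.2 ∧ p.2 ≤ n}

/-- The element `z_{i,j}` of the free algebra, with the conventions
`z_{a,b} = (-1)^(a-b) z_{b,a}` for `a > b` and `z_{a,a} = 1`. -/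
noncomputable def zf (n : ℕ) (i j : ℕ) : FreeAlgebra ℤ (ZIdx n) :=
  if h : 1 ≤ i ∧ i < j ∧ j ≤ n then FreeAlgebra.ι ℤ ⟨(i, j), h⟩
  else if h : 1 ≤ j ∧ j < i ∧ i ≤ n then ((-1 : ℤ) ^ (i - j)) • FreeAlgebra.ι ℤ ⟨(j, i), h⟩
  else if i = j then 1 else 0

/-- The defining relations of the ring `Z(n)`. -/
inductive ZRel (n : ℕ) : FreeAlgebra ℤ (ZIdx n) → FreeAlgebra ℤ (ZIdx n) → Prop
  | contain (i j i' j' : ℕ) (h1 : 1 ≤ i) (h2 : i < j) (h3 : j ≤ n)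
      (h1' : 1 ≤ i') (h2' : i' < j') (h3' : j' ≤ n)
      (hsub : Set.Icc i' j' ⊆ Set.Icc i j) :
      ZRel n (zf n i j * zf n i' j')
        (((-1 : ℤ) ^ ((j - i) * (j' - i'))) • (zf n (i + j - i') (i + j - j') * zf n i j))
  | disj (i j i' j' : ℕ) (h1 : 1 ≤ i) (h2 : i < j) (h3 : j ≤ n)
      (h1' : 1 ≤ i') (h2' : i' < j') (h3' : j' ≤ n)
      (hd : Set.Icc i j ∩ Set.Icc i' j' = ∅) :
      ZRel n (zf n i j * zf n i' j')
        (((-1 : ℤ) ^ ((j - i) * (j' - i'))) • (zf n i' j' * zf n i j))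
  | overlap (i j i' j' : ℕ) (h1 : 1 ≤ i) (h2 : i < j) (h3 : j ≤ n)
      (h1' : 1 ≤ i') (h2' : i' < j') (h3' : j' ≤ n)
      (hne : (Set.Icc i j ∩ Set.Icc i' j').Nonempty)
      (hnc1 : ¬ Set.Icc i' j' ⊆ Set.Icc i j) (hnc2 : ¬ Set.Icc i j ⊆ Set.Icc i' j') :
      ZRel n (zf n i j * zf n i' j') 0

/-- The ring `Z(n)`. -/
abbrev Zring (n : ℕ) := RingQuot (ZRel n)

/-- The image of the generator `z_{i,j}` in `Z(n)`. -/
noncomputable def zElem (n : ℕ) (i j : ℕ) : Zring n :=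
  RingQuot.mkRingHom (ZRel n) (zf n i j)



namespace ZProof

variable {n : ℕ}

/-- `J ⊆ I`. -/
def Sub (J I : ZIdx n) : Prop := I.1.1 ≤ J.1.1 ∧ J.1.2 ≤ I.1.2

/-- `I` and `J` are disjoint. -/
def Dis (I J : ZIdx n) : Prop := I.1.2 < J.1.1 ∨ J.1.2 < I.1.1

/-- `I` and `J` are compatible (nested or disjoint). -/
def Comp (I J : ZIdx n) : Prop := Sub J I ∨ Sub I J ∨ Dis I J

/-- The length of an interval. -/
def sz (I : ZIdx n) : ℕ := I.1.2 - I.1.1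

theorem sz_pos (I : ZIdx n) : 0 < sz I := by
  have := I.2; unfold sz; omega

theorem Comp.symm {I J : ZIdx n} (h : Comp I J) : Comp J I := by
  unfold Comp Sub Dis at *; omega

theorem idx_ext {I J : ZIdx n} (h1 : I.1.1 = J.1.1) (h2 : I.1.2 = J.1.2) : I = J :=
  Subtype.ext (Prod.ext h1 h2)

theorem eq_of_sub_sz {I J : ZIdx n} (h : Sub J I) (hs : sz I ≤ sz J) : J = I := by
  have h1 := I.2; have h2 := J.2
  unfold Sub sz at *
  apply idx_ext <;> omega

/-- The reflection of `J` inside `I`. -/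
def rf (I J : ZIdx n) (h : Sub J I) : ZIdx n :=
  ⟨(I.1.1 + I.1.2 - J.1.2, I.1.1 + I.1.2 - J.1.1), by
    have h1 := I.2; have h2 := J.2
    unfold Sub at h; dsimp only; omega⟩

theorem rf_sub (I J : ZIdx n) (h : Sub J I) : Sub (rf I J h) I := by
  have h1 := I.2; have h2 := J.2
  unfold Sub rf at *; dsimp only; omega

theorem rf_rf (I J : ZIdx n) (h : Sub J I) : rf I (rf I J h) (rf_sub I J h) = J := by
  have h1 := I.2; have h2 := J.2
  unfold Sub at h
  apply idx_ext <;> unfold rf <;> dsimp only <;> omega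

theorem rf_sz (I J : ZIdx n) (h : Sub J I) : sz (rf I J h) = sz J := by
  have h1 := I.2; have h2 := J.2
  unfold Sub at h
  unfold sz rf; dsimp only; omega

theorem zf_idx (I : ZIdx n) : zf n I.1.1 I.1.2 = FreeAlgebra.ι ℤ I := by
  unfold zf
  rw [dif_pos I.2]

theorem zf_rf (I J : ZIdx n) (h : Sub J I) :
    zf n (I.1.1 + I.1.2 - J.1.1) (I.1.1 + I.1.2 - J.1.2)
      = ((-1 : ℤ) ^ (sz J)) • FreeAlgebra.ι ℤ (rf I J h) := by
  have h1 := I.2; have h2 := J.2; have h3 := (rf I J h).2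
  have h4 := h
  unfold Sub at h4
  unfold zf
  rw [dif_neg (by omega), dif_pos (by unfold rf at h3; exact h3)]
  congr 2
  unfold sz; omega

/-- The generator in the quotient. -/
noncomputable def zz (I : ZIdx n) : Zring n := RingQuot.mkRingHom (ZRel n) (FreeAlgebra.ι ℤ I)

theorem Icc_sub (I J : ZIdx n) : Set.Icc J.1.1 J.1.2 ⊆ Set.Icc I.1.1 I.1.2 ↔ Sub J I := by
  have h2 := J.2
  rw [Set.Icc_subset_Icc_iff (by omega)]; rfl

theorem Icc_dis (I J : ZIdx n) : Set.Icc I.1.1 I.1.2 ∩ Set.Icc J.1.1 J.1.2 = ∅ ↔ Dis I J := by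
  have h1 := I.2; have h2 := J.2
  rw [Set.Icc_inter_Icc, Set.Icc_eq_empty_iff, not_le]
  unfold Dis
  simp only [inf_lt_iff, lt_sup_iff]
  omega

theorem zz_contain (I J : ZIdx n) (h : Sub J I) :
    zz I * zz J = (-1 : ℤ) ^ (sz I * sz J + sz J) • (zz (rf I J h) * zz I) := by
  have h1 := I.2; have h2 := J.2
  have := RingQuot.mkRingHom_rel (ZRel.contain (n := n) I.1.1 I.1.2 J.1.1 J.1.2 (by omega) (by omega)
    (by omega) (by omega) (by omega) (by omega) ((Icc_sub I J).2 h))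
  rw [zf_idx, zf_idx, zf_rf I J h, map_mul, map_zsmul, map_mul, map_zsmul, smul_mul_assoc,
    smul_smul, ← pow_add] at this
  exact this

theorem zz_dis (I J : ZIdx n) (h : Dis I J) :
    zz I * zz J = (-1 : ℤ) ^ (sz I * sz J) • (zz J * zz I) := by
  have h1 := I.2; have h2 := J.2
  have := RingQuot.mkRingHom_rel (ZRel.disj (n := n) I.1.1 I.1.2 J.1.1 J.1.2 (by omega) (by omega)
    (by omega) (by omega) (by omega) (by omega) ((Icc_dis I J).2 h))
  rw [zf_idx, zf_idx, map_mul, map_zsmul, map_mul] at this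
  exact this

theorem zz_ov (I J : ZIdx n) (h : ¬ Comp I J) : zz I * zz J = 0 := by
  have h1 := I.2; have h2 := J.2
  unfold Comp at h
  push Not at h
  have := RingQuot.mkRingHom_rel (ZRel.overlap (n := n) I.1.1 I.1.2 J.1.1 J.1.2 (by omega) (by omega)
    (by omega) (by omega) (by omega) (by omega)
    (Set.nonempty_iff_ne_empty.2 (fun h' => h.2.2 ((Icc_dis I J).1 h')))
    (fun h' => h.1 ((Icc_sub I J).1 h')) (fun h' => h.2.1 ((Icc_sub J I).1 h')))
  rw [zf_idx, zf_idx, map_mul, map_zero] at this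
  exact this

/-- Moving a small interval to the right past a bigger one. -/
theorem zz_move (I J : ZIdx n) (h : Sub I J) :
    ∃ c : ℤ, zz I * zz J = c • (zz J * zz (rf J I h)) := by
  have := zz_contain J (rf J I h) (rf_sub J I h)
  simp only [rf_rf] at this
  refine ⟨(-1 : ℤ) ^ (sz J * sz (rf J I h) + sz (rf J I h)), ?_⟩
  rw [this, smul_smul, ← pow_add, ← two_mul, pow_mul]
  simp

/-- The total order used for normal words. -/
def ro (I J : ZIdx n) : Prop := sz J < sz I ∨ (sz I = sz J ∧ I.1.1 ≤ J.1.1)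

theorem ro_total (I J : ZIdx n) : ro I J ∨ ro J I := by unfold ro; omega

theorem ro_trans {I J K : ZIdx n} (h : ro I J) (h' : ro J K) : ro I K := by unfold ro at *; omega

theorem ro_antisymm {I J : ZIdx n} (h : ro I J) (h' : ro J I) : I = J := by
  have h1 := I.2; have h2 := J.2
  unfold ro sz at *
  apply idx_ext <;> omega

/-- Value of a word. -/
noncomputable def wd (L : List (ZIdx n)) : Zring n := (L.map zz).prod

theorem wd_cons (I : ZIdx n) (L) : wd (I :: L) = zz I * wd L := by simp [wd]

theorem wd_append (L M : List (ZIdx n)) : wd (L ++ M) = wd L * wd M := by simp [wd]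

theorem insert_word (L : List (ZIdx n)) : ∀ I : ZIdx n, L.Pairwise ro →
    ∃ (c : ℤ) (I' : ZIdx n) (L' : List (ZIdx n)), sz I' = sz I ∧ L'.Pairwise ro ∧
      L'.Perm (I' :: L) ∧ (I' = I ∨ ∃ K ∈ L, sz I < sz K) ∧ zz I * wd L = c • wd L' := by
  induction L with
  | nil =>
    intro I _
    exact ⟨1, I, [I], rfl, by simp, List.Perm.refl _, Or.inl rfl, by simp [wd]⟩
  | cons J L ih =>
    intro I hs
    rw [List.pairwise_cons] at hs
    by_cases hIJ : ro I J
    · refine ⟨1, I, I :: J :: L, rfl, ?_, List.Perm.refl _, Or.inl rfl, by simp [wd]⟩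
      rw [List.pairwise_cons, List.pairwise_cons]
      refine ⟨?_, hs⟩
      intro K hK
      rcases List.mem_cons.1 hK with rfl | hK
      · exact hIJ
      · exact ro_trans hIJ (hs.1 K hK)
    have hJI : ro J I := (ro_total I J).resolve_left hIJ
    have hle : sz I ≤ sz J := by unfold ro at hJI; omega
    have key : ∀ I₁ : ZIdx n, sz I₁ = sz I → (I₁ = I ∨ sz I < sz J) →
        (∃ c : ℤ, zz I * zz J = c • (zz J * zz I₁)) →
        ∃ (c : ℤ) (I' : ZIdx n) (L' : List (ZIdx n)), sz I' = sz I ∧ L'.Pairwise ro ∧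
      L'.Perm (I' :: J :: L) ∧ (I' = I ∨ ∃ K ∈ J :: L, sz I < sz K) ∧
        zz I * wd (J :: L) = c • wd L' := by
      rintro I₁ h1 h2 ⟨c, hc⟩
      obtain ⟨d, I', L', e1, e2, e3, e4, e5⟩ := ih I₁ hs.2
      have hI' : I' = I ∨ sz I < sz J := by
        by_cases hlt : sz I < sz J
        · exact Or.inr hlt
        · left
          rcases e4 with e4 | ⟨K, hK, hlt'⟩
          · rw [e4]; exact h2.resolve_right hlt
          · have := hs.1 K hK
            unfold ro at this; omega
      refine ⟨c * d, I', J :: L', e1.trans h1, ?_, ?_, ?_, ?_⟩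
      · rw [List.pairwise_cons]
        refine ⟨?_, e2⟩
        intro K hK
        rcases List.mem_cons.1 (e3.mem_iff.1 hK) with rfl | hK
        · rcases hI' with rfl | h
          · exact hJI
          · left; omega
        · exact hs.1 K hK
      · exact (List.Perm.cons J e3).trans (List.Perm.swap _ _ _)
      · rcases hI' with h | h
        · exact Or.inl h
        · exact Or.inr ⟨J, by simp, h⟩
      · rw [wd_cons, ← mul_assoc, hc, smul_mul_assoc, mul_assoc, e5, wd_cons, mul_smul_comm,
          smul_smul]
    by_cases hc : Comp I J
    · by_cases hsub : Sub I J
      · refine key (rf J I hsub) (rf_sz _ _ _) ?_ (zz_move I J hsub)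
        right
        by_contra hlt
        have := eq_of_sub_sz hsub (by omega)
        subst this
        exact hIJ hJI
      · have hd : Dis I J := by
          rcases hc with h | h | h
          · exact absurd (eq_of_sub_sz h hle ▸ (by unfold Sub; simp)) hsub
          · exact absurd h hsub
          · exact h
        exact key I rfl (Or.inl rfl) ⟨_, zz_dis I J hd⟩
    · exact key I rfl (Or.inl rfl) ⟨0, by rw [zz_ov I J hc]; simp⟩

theorem wd_span (a : Zring n) :
    a ∈ Submodule.span ℤ (Set.range fun L : {L : List (ZIdx n) // L.Pairwise ro} => wd L.1) := by
  set S := Submodule.span ℤ (Set.range fun L : {L : List (ZIdx n) // L.Pairwise ro} => wd L.1)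
    with hS
  have hmul : ∀ I : ZIdx n, ∀ b ∈ S, zz I * b ∈ S := by
    intro I b hb
    induction hb using Submodule.span_induction with
    | mem x hx =>
      obtain ⟨L, rfl⟩ := hx
      obtain ⟨c, I', L', -, h2, -, -, h5⟩ := insert_word L.1 I L.2
      rw [h5]
      exact Submodule.smul_mem _ _ (Submodule.subset_span ⟨⟨L', h2⟩, rfl⟩)
    | zero => simp
    | add x y _ _ hx hy => rw [mul_add]; exact add_mem hx hy
    | smul c x _ hx => rw [mul_smul_comm]; exact Submodule.smul_mem _ _ hx
  have hall : ∀ x : FreeAlgebra ℤ (ZIdx n), ∀ b ∈ S, RingQuot.mkRingHom (ZRel n) x * b ∈ S := by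
    intro x
    induction x using FreeAlgebra.induction with
    | grade0 r =>
      intro b hb
      have : RingQuot.mkRingHom (ZRel n) (algebraMap ℤ (FreeAlgebra ℤ (ZIdx n)) r) = (r : Zring n) := by
        simp
      rw [this, ← zsmul_eq_mul]
      exact Submodule.smul_mem _ _ hb
    | grade1 I => intro b hb; exact hmul I b hb
    | mul x y hx hy => intro b hb; rw [map_mul, mul_assoc]; exact hx _ (hy _ hb)
    | add x y hx hy => intro b hb; rw [map_add, add_mul]; exact add_mem (hx _ hb) (hy _ hb)
  obtain ⟨x, rfl⟩ := RingQuot.mkRingHom_surjective (ZRel n) a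
  rw [← mul_one (RingQuot.mkRingHom (ZRel n) x)]
  exact hall x 1 (Submodule.subset_span ⟨⟨[], by simp⟩, by simp [wd]⟩)

theorem kill (I J : ZIdx n) (hc : ¬ Comp I J) (L : List (ZIdx n)) :
    J ∈ L → (∀ K ∈ L, sz K ≤ sz I) → zz I * wd L = 0 := by
  induction L with
  | nil => intro h; simp at h
  | cons K L ih =>
    intro hJ hs
    rw [wd_cons, ← mul_assoc]
    by_cases hIK : Comp I K
    · have hJL : J ∈ L := by
        rcases List.mem_cons.1 hJ with rfl | h
        · exact absurd hIK hc
        · exact h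
      have hih := ih hJL (fun K hK => hs K (List.mem_cons_of_mem _ hK))
      have hKI : Sub K I ∨ Dis I K := by
        rcases hIK with h | h | h
        · exact Or.inl h
        · left
          rw [eq_of_sub_sz h (hs K (by simp))]
          unfold Sub; simp
        · exact Or.inr h
      rcases hKI with h | h
      · rw [zz_contain I K h, smul_mul_assoc, mul_assoc, hih]; simp
      · rw [zz_dis I K h, smul_mul_assoc, mul_assoc, hih]; simp
    · rw [zz_ov I K hIK, zero_mul]

theorem laminar_of_ne (L : List (ZIdx n)) : L.Pairwise ro → wd L ≠ 0 →
    ∀ I ∈ L, ∀ J ∈ L, Comp I J := by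
  induction L with
  | nil => intro _ _ I h; simp at h
  | cons I L ih =>
    intro hs hne
    rw [List.pairwise_cons] at hs
    rw [wd_cons] at hne
    have hL := ih hs.2 (fun h => hne (by rw [h, mul_zero]))
    have hI : ∀ J ∈ L, Comp I J := by
      intro J hJ
      by_contra hc
      refine hne (kill I J hc L hJ ?_)
      intro K hK
      have := hs.1 K hK
      unfold ro at this; omega
    intro A hA B hB
    rcases List.mem_cons.1 hA with rfl | hA2 <;> rcases List.mem_cons.1 hB with rfl | hB2
    · left; unfold Sub; simp
    · exact hI B hB2
    · exact (hI A hA2).symm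
    · exact hL A hA2 B hB2

/-- Reversal of the interval `I`, as a permutation. -/
def rv (I : ZIdx n) : Equiv.Perm ℕ :=
  Function.Involutive.toPerm
    (fun x => if I.1.1 ≤ x ∧ x ≤ I.1.2 then I.1.1 + I.1.2 - x else x) (by
      intro x
      dsimp only
      split_ifs <;> omega)

theorem rv_apply (I : ZIdx n) (x : ℕ) :
    rv I x = if I.1.1 ≤ x ∧ x ≤ I.1.2 then I.1.1 + I.1.2 - x else x := rfl

theorem rv_mul_self (I : ZIdx n) : rv I * rv I = 1 := by
  ext x
  simp only [Equiv.Perm.mul_apply, rv_apply, Equiv.Perm.one_apply]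
  split_ifs <;> omega

theorem rv_contain (I J : ZIdx n) (h : Sub J I) : rv I * rv J = rv (rf I J h) * rv I := by
  have h1 := I.2; have h2 := J.2
  have h4 := h
  unfold Sub at h4
  ext x
  simp only [Equiv.Perm.mul_apply, rv_apply, rf]
  split_ifs <;> omega

theorem rv_dis (I J : ZIdx n) (h : Dis I J) : rv I * rv J = rv J * rv I := by
  have h1 := I.2; have h2 := J.2
  unfold Dis at h
  ext x
  simp only [Equiv.Perm.mul_apply, rv_apply]
  split_ifs <;> omega

/-- `σ` maps the interval `k` onto the interval `I`. -/
def Mp (σ : Equiv.Perm ℕ) (k I : ZIdx n) : Prop :=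
  ∀ x, (k.1.1 ≤ x ∧ x ≤ k.1.2) ↔ (I.1.1 ≤ σ x ∧ σ x ≤ I.1.2)

theorem idx_eq_of_mem {I J : ZIdx n}
    (h : ∀ x, (I.1.1 ≤ x ∧ x ≤ I.1.2) ↔ (J.1.1 ≤ x ∧ x ≤ J.1.2)) : I = J := by
  have h1 := I.2; have h2 := J.2
  have a1 := h I.1.1; have a2 := h I.1.2; have a3 := h J.1.1; have a4 := h J.1.2
  apply idx_ext <;> omega

theorem Mp.inj {σ : Equiv.Perm ℕ} {k l I : ZIdx n} (h : Mp σ k I) (h' : Mp σ l I) : k = l :=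
  idx_eq_of_mem fun x => (h x).trans (h' x).symm

theorem Mp.fn {σ : Equiv.Perm ℕ} {k I J : ZIdx n} (h : Mp σ k I) (h' : Mp σ k J) : I = J :=
  idx_eq_of_mem fun x => by
    have a := h (σ.symm x); have b := h' (σ.symm x)
    rw [Equiv.apply_symm_apply] at a b
    exact a.symm.trans b

theorem Mp.one (k : ZIdx n) : Mp 1 k k := fun _ => Iff.rfl

theorem Mp.mul {σ τ : Equiv.Perm ℕ} {k I J : ZIdx n} (h : Mp σ k I) (h' : Mp τ I J) :
    Mp (τ * σ) k J := fun x => (h x).trans (h' (σ x))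

theorem Mp.of_mul {σ τ : Equiv.Perm ℕ} {k I J : ZIdx n} (h : Mp (τ * σ) k J) (h' : Mp τ I J) :
    Mp σ k I := fun x => (h x).trans (h' (σ x)).symm

theorem Mp.sz {σ : Equiv.Perm ℕ} {k I : ZIdx n} (h : Mp σ k I) : sz k = sz I := by
  have h1 := k.2; have h2 := I.2
  have : (Finset.Icc k.1.1 k.1.2).map σ.toEmbedding = Finset.Icc I.1.1 I.1.2 := by
    ext x
    simp only [Finset.mem_map_equiv, Finset.mem_Icc]
    have a := h (σ.symm x)
    rw [Equiv.apply_symm_apply] at a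
    exact a
  have hc := congrArg Finset.card this
  rw [Finset.card_map, Nat.card_Icc, Nat.card_Icc] at hc
  unfold ZProof.sz; omega

theorem Mp.sub {σ : Equiv.Perm ℕ} {k l I J : ZIdx n} (h : Mp σ k I) (h' : Mp σ l J) :
    Sub l k ↔ Sub J I := by
  have h1 := k.2; have h2 := l.2; have h3 := I.2; have h4 := J.2
  constructor
  · intro hs
    have : ∀ y, (J.1.1 ≤ y ∧ y ≤ J.1.2) → (I.1.1 ≤ y ∧ y ≤ I.1.2) := by
      intro y hy
      have a := h (σ.symm y); have b := h' (σ.symm y)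
      rw [Equiv.apply_symm_apply] at a b
      have := b.2 hy
      apply a.1; unfold Sub at hs; omega
    have a := this J.1.1; have b := this J.1.2
    unfold Sub; omega
  · intro hs
    have : ∀ y, (l.1.1 ≤ y ∧ y ≤ l.1.2) → (k.1.1 ≤ y ∧ y ≤ k.1.2) := by
      intro y hy
      have := (h' y).1 hy
      apply (h y).2; unfold Sub at hs; omega
    have a := this l.1.1; have b := this l.1.2
    unfold Sub; omega

theorem dis_iff (k l : ZIdx n) :
    Dis k l ↔ ∀ x, (k.1.1 ≤ x ∧ x ≤ k.1.2) → (l.1.1 ≤ x ∧ x ≤ l.1.2) → False := by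
  have h1 := k.2; have h2 := l.2
  constructor
  · intro h x; unfold Dis at h; omega
  · intro h
    by_contra hd
    unfold Dis at hd
    rcases le_total k.1.1 l.1.1 with hle | hle
    · exact h l.1.1 (by omega) (by omega)
    · exact h k.1.1 (by omega) (by omega)

theorem Mp.dis {σ : Equiv.Perm ℕ} {k l I J : ZIdx n} (h : Mp σ k I) (h' : Mp σ l J) :
    Dis k l ↔ Dis I J := by
  rw [dis_iff, dis_iff]
  constructor
  · intro hs y h1 h2
    have a := h (σ.symm y); have b := h' (σ.symm y)
    rw [Equiv.apply_symm_apply] at a b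
    exact hs _ (a.2 h1) (b.2 h2)
  · intro hs y h1 h2
    exact hs _ ((h y).1 h1) ((h' y).1 h2)

theorem Mp.comp {σ : Equiv.Perm ℕ} {k l I J : ZIdx n} (h : Mp σ k I) (h' : Mp σ l J) :
    Comp k l ↔ Comp I J := by
  unfold Comp
  rw [h.sub h', h'.sub h, h.dis h']

theorem Mp.rv_sub {I J : ZIdx n} (h : Sub J I) : Mp (rv J) I I := by
  have h1 := I.2; have h2 := J.2
  unfold Sub at h
  intro x
  rw [rv_apply]; split_ifs <;> omega

theorem Mp.rv_dis {I J : ZIdx n} (h : Dis I J) : Mp (rv J) I I := by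
  have h1 := I.2; have h2 := J.2
  unfold Dis at h
  intro x
  rw [rv_apply]; split_ifs <;> omega

theorem Mp.rv_rf {I J : ZIdx n} (h : Sub J I) : Mp (rv I) J (rf I J h) := by
  have h1 := I.2; have h2 := J.2
  have h4 := h
  unfold Sub at h4
  intro x
  rw [rv_apply]; unfold rf; dsimp only; split_ifs <;> omega

theorem sub_refl (I : ZIdx n) : Sub I I := by unfold Sub; simp

theorem Dis.symm {I J : ZIdx n} (h : Dis I J) : Dis J I := by unfold Dis at *; omega

section Rep

open Classical

/-- Sign exponents. -/
noncomputable def bt (l k : ZIdx n) : ℕ :=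
  if l = k then 0 else if Sub l k then sz l * (sz k + 1) else
    if l.1.2 < k.1.1 then sz l * sz k else 0

/-- Sign. -/
noncomputable def ep (G : Finset (ZIdx n)) (k : ZIdx n) (m : ZIdx n → ℕ) : ℤ :=
  (-1) ^ (∑ l ∈ G, m l * bt l k)

theorem ep_add (G : Finset (ZIdx n)) (k l : ZIdx n) (hl : l ∈ G) (m : ZIdx n → ℕ) :
    ep G k (m + Pi.single l 1) = ep G k m * (-1) ^ bt l k := by
  unfold ep
  rw [← pow_add]
  congr 1
  simp only [Pi.add_apply, add_mul, Finset.sum_add_distrib]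
  congr 1
  rw [Finset.sum_eq_single l]
  · simp
  · intro b _ hb
    simp [hb]
  · intro h; exact absurd hl h

theorem ep_sq (G : Finset (ZIdx n)) (k : ZIdx n) (m : ZIdx n → ℕ) : ep G k m = 1 ∨ ep G k m = -1 :=
  neg_one_pow_eq_or _ _

/-- The states. -/
abbrev St (n : ℕ) := Equiv.Perm ℕ × (ZIdx n → ℕ)

/-- The module. -/
abbrev VV (n : ℕ) := St n →₀ ℤ

/-- Action of a generator on a state. -/
noncomputable def step (G : Finset (ZIdx n)) (I : ZIdx n) (s : St n) : VV n :=
  if h : ∃ k ∈ G, Mp s.1 k I then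
    Finsupp.single (rv I * s.1, s.2 + Pi.single h.choose 1) (ep G h.choose s.2)
  else 0

theorem step_pos {G : Finset (ZIdx n)} {I k : ZIdx n} {σ : Equiv.Perm ℕ} (m : ZIdx n → ℕ)
    (hk : k ∈ G) (h : Mp σ k I) :
    step G I (σ, m) = Finsupp.single (rv I * σ, m + Pi.single k 1) (ep G k m) := by
  have hex : ∃ k ∈ G, Mp σ k I := ⟨k, hk, h⟩
  have : hex.choose = k := hex.choose_spec.2.inj h
  unfold step
  rw [dif_pos hex, this]

theorem step_neg {G : Finset (ZIdx n)} {I : ZIdx n} {σ : Equiv.Perm ℕ} (m : ZIdx n → ℕ)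
    (h : ¬ ∃ k ∈ G, Mp σ k I) : step G I (σ, m) = 0 := by
  unfold step
  rw [dif_neg h]

/-- Action of a generator. -/
noncomputable def act (G : Finset (ZIdx n)) (I : ZIdx n) : Module.End ℤ (VV n) :=
  Finsupp.linearCombination ℤ (step G I)

theorem act_single (G : Finset (ZIdx n)) (I : ZIdx n) (s : St n) (c : ℤ) :
    act G I (Finsupp.single s c) = c • step G I s := by
  unfold act; simp

theorem act_pos {G : Finset (ZIdx n)} {I k : ZIdx n} {σ : Equiv.Perm ℕ} (m : ZIdx n → ℕ) (c : ℤ)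
    (hk : k ∈ G) (h : Mp σ k I) :
    act G I (Finsupp.single (σ, m) c)
      = Finsupp.single (rv I * σ, m + Pi.single k 1) (c * ep G k m) := by
  rw [act_single, step_pos m hk h, Finsupp.smul_single, smul_eq_mul]

theorem act_neg {G : Finset (ZIdx n)} {I : ZIdx n} {σ : Equiv.Perm ℕ} (m : ZIdx n → ℕ) (c : ℤ)
    (h : ¬ ∃ k ∈ G, Mp σ k I) :
    act G I (Finsupp.single (σ, m) c) = 0 := by
  rw [act_single, step_neg m h, smul_zero]

theorem neg_one_pow_congr {a b : ℕ} (h : a % 2 = b % 2) : (-1 : ℤ) ^ a = (-1) ^ b := by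
  rw [neg_one_pow_eq_pow_mod_two, h, ← neg_one_pow_eq_pow_mod_two]

/-- General commutation principle. -/
theorem act_comm (G : Finset (ZIdx n)) (I J J' : ZIdx n) (e : ℕ)
    (hI : Mp (rv J) I I) (hJ : Mp (rv I) J J') (hrv : rv I * rv J = rv J' * rv I)
    (he : ∀ (σ : Equiv.Perm ℕ) (k l : ZIdx n), Mp σ k I → Mp σ l J →
      (bt l k) % 2 = (e + bt k l) % 2) :
    act G I * act G J = (-1 : ℤ) ^ e • (act G J' * act G I) := by
  refine Finsupp.lhom_ext ?_
  rintro ⟨σ, m⟩ c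
  simp only [Module.End.mul_apply, LinearMap.smul_apply]
  by_cases h1 : ∃ l ∈ G, Mp σ l J
  · obtain ⟨l, hl, hlJ⟩ := h1
    rw [act_pos m c hl hlJ]
    by_cases h2 : ∃ k ∈ G, Mp σ k I
    · obtain ⟨k, hk, hkI⟩ := h2
      rw [act_pos _ _ hk (hkI.mul hI), act_pos m c hk hkI, act_pos _ _ hl (hlJ.mul hJ),
        ep_add _ _ _ hl, ep_add _ _ _ hk, Finsupp.smul_single, ← mul_assoc, ← mul_assoc, hrv,
        add_right_comm, smul_eq_mul, neg_one_pow_congr (he σ k l hkI hlJ), pow_add]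
      congr 1
      ring
    · rw [act_neg m c h2, act_neg, map_zero, smul_zero]
      rintro ⟨k, hk, hkI⟩
      exact h2 ⟨k, hk, hkI.of_mul hI⟩
  · rw [act_neg m c h1, map_zero]
    by_cases h2 : ∃ k ∈ G, Mp σ k I
    · obtain ⟨k, hk, hkI⟩ := h2
      rw [act_pos m c hk hkI, act_neg, smul_zero]
      rintro ⟨l, hl, hlJ⟩
      exact h1 ⟨l, hl, hlJ.of_mul hJ⟩
    · rw [act_neg m c h2, map_zero, smul_zero]

theorem act_contain (G : Finset (ZIdx n)) (I J : ZIdx n) (h : Sub J I) :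
    act G I * act G J = (-1 : ℤ) ^ (sz I * sz J + sz J) • (act G (rf I J h) * act G I) := by
  refine act_comm G I J (rf I J h) _ (Mp.rv_sub h) (Mp.rv_rf h) (rv_contain I J h) ?_
  intro σ k l hk hl
  rw [← hk.sz, ← hl.sz]
  have hs := (hk.sub hl).2 h
  unfold bt
  by_cases hkl : l = k
  · subst hkl
    simp only [if_true]
    have := Nat.even_mul_succ_self (sz l)
    rw [Nat.even_iff] at this
    rw [mul_add, mul_one] at this
    omega
  · rw [if_neg hkl, if_pos hs, if_neg (Ne.symm hkl), if_neg, if_neg]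
    · ring_nf
    · have := k.2; have := l.2; unfold Sub at hs; omega
    · intro h'
      apply hkl
      unfold Sub at hs h'
      apply idx_ext <;> omega

theorem act_dis (G : Finset (ZIdx n)) (I J : ZIdx n) (h : Dis I J) :
    act G I * act G J = (-1 : ℤ) ^ (sz I * sz J) • (act G J * act G I) := by
  refine act_comm G I J J _ (Mp.rv_dis h) (Mp.rv_dis h.symm) (rv_dis I J h) ?_
  intro σ k l hk hl
  rw [← hk.sz, ← hl.sz]
  have hs := (hk.dis hl).2 h
  have h1 := k.2; have h2 := l.2
  have n1 : ¬ Sub k l := by unfold Sub Dis at *; omega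
  have n2 : ¬ Sub l k := by unfold Sub Dis at *; omega
  have n3 : l ≠ k := by rintro rfl; exact n1 (sub_refl _)
  unfold bt
  rw [if_neg n3, if_neg n2, if_neg n3.symm, if_neg n1]
  unfold Dis at hs
  split_ifs
  · omega
  · rw [mul_comm]; omega
  · have : sz k * sz l + sz k * sz l = 2 * (sz k * sz l) := by ring
    omega
  · omega

theorem act_ov (G : Finset (ZIdx n)) (hG : ∀ k ∈ G, ∀ l ∈ G, Comp k l) (I J : ZIdx n)
    (h : ¬ Comp I J) : act G I * act G J = 0 := by
  refine Finsupp.lhom_ext ?_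
  rintro ⟨σ, m⟩ c
  simp only [Module.End.mul_apply, LinearMap.zero_apply]
  by_cases h1 : ∃ l ∈ G, Mp σ l J
  · obtain ⟨l, hl, hlJ⟩ := h1
    rw [act_pos m c hl hlJ, act_neg]
    rintro ⟨k, hk, hkI⟩
    exact h ((hkI.comp (hlJ.mul (Mp.rv_sub (sub_refl J)))).1 (hG k hk l hl))
  · rw [act_neg m c h1, map_zero]

theorem exists_rep (G : Finset (ZIdx n)) (hG : ∀ k ∈ G, ∀ l ∈ G, Comp k l) :
    ∃ Φ : Zring n →+* Module.End ℤ (VV n), ∀ I, Φ (zz I) = act G I := by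
  let φ : FreeAlgebra ℤ (ZIdx n) →+* Module.End ℤ (VV n) :=
    (FreeAlgebra.lift ℤ (act G)).toRingHom
  have hι : ∀ I, φ (FreeAlgebra.ι ℤ I) = act G I := fun I => FreeAlgebra.lift_ι_apply _ _
  have hφ : ∀ ⦃x y⦄, ZRel n x y → φ x = φ y := by
    intro x y hxy
    cases hxy with
    | contain i j i' j' h1 h2 h3 h1' h2' h3' hsub =>
      have hs := (Icc_sub ⟨(i, j), h1, h2, h3⟩ ⟨(i', j'), h1', h2', h3'⟩).1 hsub
      have e1 := zf_idx (n := n) ⟨(i, j), h1, h2, h3⟩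
      have e2 := zf_idx (n := n) ⟨(i', j'), h1', h2', h3'⟩
      have e3 := zf_rf _ _ hs
      have e4 := act_contain G _ _ hs
      dsimp only at e1 e2 e3
      rw [e1, e2, e3, map_mul, map_zsmul, map_mul, map_zsmul, hι, hι, hι, smul_mul_assoc,
        smul_smul, ← pow_add, e4]
      rfl
    | disj i j i' j' h1 h2 h3 h1' h2' h3' hd =>
      have hs := (Icc_dis ⟨(i, j), h1, h2, h3⟩ ⟨(i', j'), h1', h2', h3'⟩).1 hd
      have e1 := zf_idx (n := n) ⟨(i, j), h1, h2, h3⟩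
      have e2 := zf_idx (n := n) ⟨(i', j'), h1', h2', h3'⟩
      have e4 := act_dis G _ _ hs
      dsimp only at e1 e2
      rw [e1, e2, map_mul, map_zsmul, map_mul, hι, hι, e4]
      rfl
    | overlap i j i' j' h1 h2 h3 h1' h2' h3' hne hnc1 hnc2 =>
      have e1 := zf_idx (n := n) ⟨(i, j), h1, h2, h3⟩
      have e2 := zf_idx (n := n) ⟨(i', j'), h1', h2', h3'⟩
      have e4 := act_ov G hG ⟨(i, j), h1, h2, h3⟩ ⟨(i', j'), h1', h2', h3'⟩ (by
        rintro (h | h | h)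
        · exact hnc1 ((Icc_sub ⟨(i, j), h1, h2, h3⟩ ⟨(i', j'), h1', h2', h3'⟩).2 h)
        · exact hnc2 ((Icc_sub ⟨(i', j'), h1', h2', h3'⟩ ⟨(i, j), h1, h2, h3⟩).2 h)
        · exact hne.ne_empty ((Icc_dis ⟨(i, j), h1, h2, h3⟩ ⟨(i', j'), h1', h2', h3'⟩).2 h))
      dsimp only at e1 e2
      rw [e1, e2, map_mul, hι, hι, e4, map_zero]
  refine ⟨RingQuot.lift ⟨φ, hφ⟩, fun I => ?_⟩
  unfold zz
  rw [RingQuot.lift_mkRingHom_apply]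
  exact hι I

/-- Permutation of a word. -/
def pw (L : List (ZIdx n)) : Equiv.Perm ℕ := (L.map rv).prod

theorem pw_cons (I : ZIdx n) (L) : pw (I :: L) = rv I * pw L := by simp [pw]

theorem pw_append (L M : List (ZIdx n)) : pw (L ++ M) = pw L * pw M := by simp [pw]

/-- The word `L` acts in an admissible way on states at `σ`, with counts `d`. -/
inductive Adm (G : Finset (ZIdx n)) (σ : Equiv.Perm ℕ) : List (ZIdx n) → (ZIdx n → ℕ) → Prop
  | nil : Adm G σ [] 0
  | cons (I : ZIdx n) (L : List (ZIdx n)) (d : ZIdx n → ℕ) (k : ZIdx n) (h : Adm G σ L d)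
      (hk : k ∈ G) (hm : Mp (pw L * σ) k I) : Adm G σ (I :: L) (d + Pi.single k 1)

variable {G : Finset (ZIdx n)} {σ τ : Equiv.Perm ℕ}

theorem Adm.fn {L : List (ZIdx n)} {d d' : ZIdx n → ℕ} (h : Adm G σ L d) (h' : Adm G σ L d') :
    d = d' := by
  induction h generalizing d' with
  | nil => cases h'; rfl
  | cons I L d k _ hk hm ih =>
    cases h' with
    | cons _ _ d' k' h2 hk2 hm2 => rw [ih h2, hm.inj hm2]

theorem Adm.congr {L : List (ZIdx n)} {d : ZIdx n → ℕ} (h : Adm G σ L d)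
    (hc : ∀ k ∈ G, Mp (σ⁻¹ * τ) k k) : Adm G τ L d := by
  have hst : ∀ k ∈ G, ∀ x, (k.1.1 ≤ σ.symm x ∧ σ.symm x ≤ k.1.2) ↔
      (k.1.1 ≤ τ.symm x ∧ τ.symm x ≤ k.1.2) := by
    intro k hk x
    have b := hc k hk (τ.symm x)
    rw [Equiv.Perm.mul_apply, Equiv.apply_symm_apply] at b
    exact b.symm
  induction h with
  | nil => exact Adm.nil
  | cons I L d k _ hk hm ih =>
    refine Adm.cons I L d k ih hk ?_
    intro x
    have a := hm (σ.symm (τ x))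
    have b := hst k hk (τ x)
    simp only [Equiv.Perm.mul_apply, Equiv.apply_symm_apply, Equiv.symm_apply_apply] at a b ⊢
    exact b.symm.trans a

theorem Adm.append {A B : List (ZIdx n)} {d e : ZIdx n → ℕ} (hB : Adm G σ B d)
    (hA : Adm G (pw B * σ) A e) : Adm G σ (A ++ B) (d + e) := by
  induction hA with
  | nil => simpa using hB
  | cons I L d' k _ hk hm ih =>
    rw [← add_assoc]
    refine Adm.cons I (L ++ B) _ k ih hk ?_
    rw [pw_append, mul_assoc]; exact hm

theorem Adm.split {A B : List (ZIdx n)} : ∀ {d : ZIdx n → ℕ}, Adm G σ (A ++ B) d →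
    ∃ d₁ d₂, d = d₁ + d₂ ∧ Adm G σ B d₁ ∧ Adm G (pw B * σ) A d₂ := by
  induction A with
  | nil => intro d h; exact ⟨d, 0, by simp, h, Adm.nil⟩
  | cons I A ih =>
    intro d h
    rw [List.cons_append] at h
    cases h with
    | cons _ _ d' k h hk hm =>
      obtain ⟨d₁, d₂, e1, e2, e3⟩ := ih h
      refine ⟨d₁, d₂ + Pi.single k 1, by rw [e1, add_assoc], e2, ?_⟩
      refine Adm.cons I A d₂ k e3 hk ?_
      rw [pw_append, mul_assoc] at hm; exact hm

theorem Adm.le {L : List (ZIdx n)} {d : ZIdx n → ℕ} (h : Adm G σ L d) (l : ZIdx n) :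
    d l ≤ L.length := by
  induction h with
  | nil => simp
  | cons I L d k _ hk hm ih =>
    have : (Pi.single k 1 : ZIdx n → ℕ) l ≤ 1 := by
      rw [Pi.single_apply]; split_ifs <;> simp
    simp only [Pi.add_apply, List.length_cons]; omega

theorem Adm.reverse {L : List (ZIdx n)} {d : ZIdx n → ℕ} (h : Adm G σ L d) :
    Adm G (pw L * σ) L.reverse d ∧ pw L.reverse * pw L = 1 := by
  induction h with
  | nil => exact ⟨Adm.nil, by simp [pw]⟩
  | cons I L d k _ hk hm ih =>
    rw [List.reverse_cons, pw_cons, add_comm]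
    have e : pw [I] * (rv I * pw L * σ) = pw L * σ := by
      have : pw [I] = rv I := by simp [pw]
      rw [this, mul_assoc, ← mul_assoc (rv I) (rv I), rv_mul_self, one_mul]
    refine ⟨Adm.append ?_ (by rw [e]; exact ih.1), ?_⟩
    · have := Adm.cons (G := G) (σ := rv I * pw L * σ) I [] 0 k Adm.nil hk ?_
      · simpa using this
      · have e2 : pw ([] : List (ZIdx n)) = 1 := by simp [pw]
        rw [e2, one_mul, mul_assoc]
        exact hm.mul (Mp.rv_sub (sub_refl I))
    · have : pw [I] = rv I := by simp [pw]
      rw [pw_append, this, mul_assoc, ← mul_assoc (rv I) (rv I), rv_mul_self, one_mul]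
      exact ih.2

/-- Action of a word. -/
noncomputable def aw (G : Finset (ZIdx n)) (L : List (ZIdx n)) : Module.End ℤ (VV n) :=
  (L.map (act G)).prod

theorem aw_cons (I : ZIdx n) (L) : aw G (I :: L) = act G I * aw G L := by simp [aw]

theorem Adm.act {L : List (ZIdx n)} {d : ZIdx n → ℕ} (h : Adm G σ L d) (m : ZIdx n → ℕ) :
    ∃ e : ℤ, e ≠ 0 ∧ aw G L (Finsupp.single (σ, m) 1) = Finsupp.single (pw L * σ, m + d) e := by
  induction h with
  | nil => exact ⟨1, by simp, by simp [aw, pw]⟩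
  | cons I L d k _ hk hm ih =>
    obtain ⟨e, he, ih⟩ := ih
    refine ⟨e * ep G k (m + d), mul_ne_zero he ?_, ?_⟩
    · rcases ep_sq G k (m + d) with h | h <;> rw [h] <;> simp
    · rw [aw_cons, Module.End.mul_apply, ih, act_pos _ _ hk hm, pw_cons, mul_assoc, add_assoc]

theorem aw_zero (L : List (ZIdx n)) (m : ZIdx n → ℕ) (h : ¬ ∃ d, Adm G σ L d) :
    aw G L (Finsupp.single (σ, m) 1) = 0 := by
  induction L with
  | nil => exact absurd ⟨0, Adm.nil⟩ h
  | cons I L ih =>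
    rw [aw_cons, Module.End.mul_apply]
    by_cases h' : ∃ d, Adm G σ L d
    · obtain ⟨d, hd⟩ := h'
      obtain ⟨e, -, he⟩ := hd.act m
      rw [he, act_neg]
      rintro ⟨k, hk, hm⟩
      exact h ⟨_, Adm.cons I L d k hd hk hm⟩
    · rw [ih h', map_zero]

theorem act_inv (hG : ∀ k ∈ G, ∀ l ∈ G, Comp k l) (hσ : ∀ k ∈ G, Mp σ k k)
    (L : List (ZIdx n)) (hL : ∀ I ∈ L, I ∈ G) (k : ZIdx n) (hk : k ∈ G)
    (hs : ∀ I ∈ L, sz I ≤ sz k) : Mp (pw L * σ) k k := by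
  induction L with
  | nil => simpa [pw] using hσ k hk
  | cons I L ih =>
    rw [pw_cons, mul_assoc]
    refine (ih (fun J hJ => hL J (List.mem_cons_of_mem _ hJ))
      (fun J hJ => hs J (List.mem_cons_of_mem _ hJ))).mul ?_
    rcases hG k hk I (hL I (by simp)) with h | h | h
    · exact Mp.rv_sub h
    · rw [eq_of_sub_sz h (hs I (by simp))]; exact Mp.rv_sub (sub_refl _)
    · exact Mp.rv_dis h

/-- Count vector of a word. -/
noncomputable def ct (L : List (ZIdx n)) : ZIdx n → ℕ := fun I => L.count I

theorem ct_cons (I : ZIdx n) (L) : ct (I :: L) = ct L + Pi.single I 1 := by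
  funext J
  simp only [ct, List.count_cons, Pi.add_apply, Pi.single_apply, beq_iff_eq]
  congr 1
  simp only [eq_comm]

theorem adm_sorted (hG : ∀ k ∈ G, ∀ l ∈ G, Comp k l) (hσ : ∀ k ∈ G, Mp σ k k)
    (L : List (ZIdx n)) (hs : L.Pairwise ro) (hL : ∀ I ∈ L, I ∈ G) : Adm G σ L (ct L) := by
  induction L with
  | nil => exact Adm.nil
  | cons I L ih =>
    rw [List.pairwise_cons] at hs
    rw [ct_cons]
    have hL' : ∀ J ∈ L, J ∈ G := fun J hJ => hL J (List.mem_cons_of_mem _ hJ)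
    refine Adm.cons I L _ I (ih hs.2 hL') (hL I (by simp)) ?_
    refine act_inv hG hσ L hL' I (hL I (by simp)) ?_
    intro J hJ
    have := hs.1 J hJ
    unfold ro at this; omega

theorem sorted_adm (hG : ∀ k ∈ G, ∀ l ∈ G, Comp k l) (hσ : ∀ k ∈ G, Mp σ k k)
    {L : List (ZIdx n)} {d : ZIdx n → ℕ} (h : Adm G σ L d) (hs : L.Pairwise ro) :
    (∀ I ∈ L, I ∈ G) ∧ d = ct L := by
  induction h with
  | nil => exact ⟨by simp, rfl⟩
  | cons I L d k h hk hm ih =>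
    rw [List.pairwise_cons] at hs
    obtain ⟨h1, h2⟩ := ih hs.2
    have : k = I := by
      refine (act_inv hG hσ L h1 k hk ?_).fn hm
      intro J hJ
      have := hs.1 J hJ
      rw [hm.sz]
      unfold ro at this; omega
    subst this
    refine ⟨?_, by rw [ct_cons, h2]⟩
    intro J hJ
    rcases List.mem_cons.1 hJ with rfl | hJ
    · exact hk
    · exact h1 J hJ

theorem ct_inj {L M : List (ZIdx n)} (hL : L.Pairwise ro) (hM : M.Pairwise ro)
    (h : ct L = ct M) : L = M := by
  refine List.Perm.eq_of_pairwise (fun a b _ _ => ro_antisymm) hL hM ?_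
  rw [List.perm_iff_count]
  intro a
  exact congrFun h a

/-- The word with even multiplicities. -/
def ew (q : ZIdx n → ℕ) : List (ZIdx n) → List (ZIdx n)
  | [] => []
  | k :: M => List.replicate (2 * q k) k ++ ew q M

theorem pw_replicate (k : ZIdx n) (q : ℕ) : pw (List.replicate (2 * q) k) = 1 := by
  unfold pw
  rw [List.map_replicate, List.prod_replicate, pow_mul, pow_two, rv_mul_self, one_pow]

theorem pw_ew (q : ZIdx n → ℕ) (M : List (ZIdx n)) : pw (ew q M) = 1 := by
  induction M with
  | nil => simp [ew, pw]
  | cons k M ih => rw [ew, pw_append, ih, pw_replicate, one_mul]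

theorem rv_pow_fix (k : ZIdx n) (q : ℕ) : Mp (pw (List.replicate q k)) k k := by
  induction q with
  | zero => simpa [pw] using Mp.one k
  | succ q ih =>
    rw [List.replicate_succ, pw_cons]
    exact ih.mul (Mp.rv_sub (sub_refl k))

theorem adm_replicate {l k : ZIdx n} (hl : l ∈ G) (h : Mp σ l k) (q : ℕ) :
    Adm G σ (List.replicate q k) (Pi.single l q) := by
  induction q with
  | zero => simpa using Adm.nil
  | succ q ih =>
    rw [List.replicate_succ, Pi.single_add]
    exact Adm.cons k _ _ l ih hl (h.mul (rv_pow_fix k q))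

theorem replicate_adm {k : ZIdx n} {q : ℕ} (hq : 0 < q) {d : ZIdx n → ℕ}
    (h : Adm G σ (List.replicate q k) d) : ∃ l ∈ G, Mp σ l k := by
  obtain ⟨q, rfl⟩ : ∃ q', q = q' + 1 := ⟨q - 1, by omega⟩
  rw [List.replicate_succ] at h
  cases h with
  | cons _ _ d' l h hl hm => exact ⟨l, hl, hm.of_mul (rv_pow_fix k q)⟩

theorem ew_adm (q : ZIdx n → ℕ) (hq : ∀ k, 0 < q k) (M : List (ZIdx n)) (hM : M.Nodup) :
    ∀ {d : ZIdx n → ℕ}, Adm G σ (ew q M) d →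
      (∀ k ∈ M, ∃ l ∈ G, Mp σ l k ∧ d l = 2 * q k) ∧
      (∀ l, (∀ k ∈ M, ¬ Mp σ l k) → d l = 0) := by
  induction M with
  | nil =>
    intro d h
    rw [ew] at h
    cases h
    exact ⟨by simp, by simp⟩
  | cons k M ih =>
    intro d h
    rw [List.nodup_cons] at hM
    obtain ⟨d₁, d₂, rfl, h1, h2⟩ := Adm.split h
    rw [pw_ew, one_mul] at h2
    obtain ⟨l, hl, hlk⟩ := replicate_adm (by have := hq k; omega) h2
    have hd := h2.fn (adm_replicate hl hlk _)
    obtain ⟨i1, i2⟩ := ih hM.2 h1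
    subst hd
    constructor
    · intro k' hk'
      rcases List.mem_cons.1 hk' with rfl | hk'
      · refine ⟨l, hl, hlk, ?_⟩
        have : d₁ l = 0 := i2 l (fun k hk hm => hM.1 (by rw [hlk.fn hm]; exact hk))
        simp [this]
      · obtain ⟨l', hl', hm', hd'⟩ := i1 k' hk'
        refine ⟨l', hl', hm', ?_⟩
        have : l' ≠ l := by
          rintro rfl
          exact hM.1 (by rw [hlk.fn hm']; exact hk')
        simp [hd', this]
    · intro l' hl'
      have a := i2 l' (fun k hk => hl' k (List.mem_cons_of_mem _ hk))
      have : l' ≠ l := by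
        rintro rfl
        exact hl' k (by simp) hlk
      simp [a, this]

theorem adm_ew (q : ZIdx n → ℕ) (hσ : ∀ k ∈ G, Mp σ k k) (M : List (ZIdx n))
    (hM : ∀ k ∈ M, k ∈ G) : ∃ d, Adm G σ (ew q M) d := by
  induction M with
  | nil => exact ⟨0, Adm.nil⟩
  | cons k M ih =>
    obtain ⟨d, hd⟩ := ih (fun k hk => hM k (List.mem_cons_of_mem _ hk))
    refine ⟨_, hd.append (adm_replicate (hM k (by simp)) ?_ _)⟩
    rw [pw_ew, one_mul]
    exact hσ k (hM k (by simp))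

theorem rep_wd {Φ : Zring n →+* Module.End ℤ (VV n)} (hΦ : ∀ I, Φ (zz I) = act G I)
    (L : List (ZIdx n)) : Φ (wd L) = aw G L := by
  induction L with
  | nil => simp [wd, aw]
  | cons I L ih => rw [wd_cons, map_mul, hΦ, ih, aw_cons]

theorem arith {B b b' x y : ℕ} (h1 : b < B) (h2 : b' < B)
    (h : b + 2 * (B * (x + 1)) = b' + 2 * (B * (y + 1))) : x = y := by
  rcases lt_trichotomy x y with hlt | heq | hlt
  · have := Nat.mul_le_mul_left B (show x + 1 + 1 ≤ y + 1 by omega)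
    rw [mul_add B (x + 1) 1] at this
    omega
  · exact heq
  · have := Nat.mul_le_mul_left B (show y + 1 + 1 ≤ x + 1 by omega)
    rw [mul_add B (y + 1) 1] at this
    omega

theorem main (a : Zring n) (ha : a ≠ 0) : ∃ r : Zring n, a * r * a ≠ 0 := by
  obtain ⟨c, hc⟩ := (Finsupp.mem_span_range_iff_exists_finsupp).1 (wd_span a)
  obtain ⟨L₀, hL₀, hne⟩ : ∃ L₀ ∈ c.support, wd L₀.1 ≠ 0 := by
    by_contra hcon
    push Not at hcon
    apply ha
    rw [← hc, Finsupp.sum]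
    exact Finset.sum_eq_zero fun L hL => by rw [hcon L hL]; exact zsmul_zero _
  set G : Finset (ZIdx n) := L₀.1.toFinset with hGdef
  have hG : ∀ k ∈ G, ∀ l ∈ G, Comp k l := by
    intro k hk l hl
    exact laminar_of_ne L₀.1 L₀.2 hne k (List.mem_toFinset.1 hk) l (List.mem_toFinset.1 hl)
  have hLG : ∀ I ∈ L₀.1, I ∈ G := fun I hI => List.mem_toFinset.2 hI
  have h1fix : ∀ k ∈ G, Mp 1 k k := fun k _ => Mp.one k
  obtain ⟨Φ, hΦ⟩ := exists_rep G hG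
  have hA₀ := adm_sorted hG h1fix L₀.1 L₀.2 hLG
  obtain ⟨hu, hpu⟩ := hA₀.reverse
  rw [mul_one] at hu
  set u := L₀.1.reverse with hudef
  have hpu' : (pw L₀.1)⁻¹ = pw u := (eq_inv_of_mul_eq_one_left hpu).symm
  -- bound
  obtain ⟨N, hN⟩ : ∃ N, ∀ x ∈ c.support, x.1.length ≤ N :=
    ⟨c.support.sup (fun x => x.1.length), fun x hx => Finset.le_sup (f := fun x => x.1.length) hx⟩
  set B := 2 * N + u.length + 1 with hB
  set q : ZIdx n → ℕ := fun k => B * (Nat.pair k.1.1 k.1.2 + 1) with hq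
  have hq0 : ∀ k, 0 < q k := fun k => Nat.mul_pos (by omega) (by omega)
  set E := ew q G.toList with hE
  refine ⟨wd E * wd u, fun hzero => ?_⟩
  -- unique product
  let A : Finset (ZIdx n → ℕ) :=
    (c.support.filter fun x => ∀ I ∈ x.1, I ∈ G).image fun x => ct x.1
  let Y : Finset (ZIdx n → ℕ) :=
    (c.support.filter fun y => (∀ I ∈ y.1, I ∈ G) ∧ ∀ k ∈ G, Mp (pw u * pw y.1) k k).image
      fun x => ct x.1
  have hAn : A.Nonempty := ⟨ct L₀.1, Finset.mem_image.2 ⟨L₀, Finset.mem_filter.2 ⟨hL₀, hLG⟩, rfl⟩⟩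
  have hYn : Y.Nonempty := ⟨ct L₀.1, Finset.mem_image.2 ⟨L₀, Finset.mem_filter.2 ⟨hL₀, hLG, by
    rw [hpu]; exact h1fix⟩, rfl⟩⟩
  obtain ⟨a0, ha0, b0, hb0, huniq⟩ := UniqueSums.uniqueAdd_of_nonempty hAn hYn
  obtain ⟨x₀, hx₀, rfl⟩ := Finset.mem_image.1 ha0
  obtain ⟨y₀, hy₀, rfl⟩ := Finset.mem_image.1 hb0
  obtain ⟨hx₀S, hx₀G⟩ := Finset.mem_filter.1 hx₀
  obtain ⟨hy₀S, hy₀G, hy₀f⟩ := Finset.mem_filter.1 hy₀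
  obtain ⟨p, hp⟩ := adm_ew q h1fix G.toList (fun k hk => Finset.mem_toList.1 hk)
  rw [← hE] at hp
  have hpval : ∀ k ∈ G, p k = 2 * q k := by
    intro k hk
    obtain ⟨l, hl, hm, hd⟩ := (ew_adm q hq0 G.toList G.nodup_toList hp).1 k (Finset.mem_toList.2 hk)
    rw [(Mp.one k).inj hm, hd]
    rw [← (Mp.one k).inj hm]
  -- admissibility of the chosen word
  have hw : ∀ x y : {L : List (ZIdx n) // L.Pairwise ro}, (∀ I ∈ x.1, I ∈ G) →
      (∀ I ∈ y.1, I ∈ G) → (∀ k ∈ G, Mp (pw u * pw y.1) k k) →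
      Adm G 1 (x.1 ++ (E ++ (u ++ y.1))) (ct y.1 + ct L₀.1 + p + ct x.1) := by
    intro x y hx hy hf
    have s1 := adm_sorted hG h1fix y.1 y.2 hy
    have s2 : Adm G (pw y.1 * 1) u (ct L₀.1) := by
      refine hu.congr ?_
      rw [mul_one, hpu']; exact hf
    have s3 : Adm G (pw (u ++ y.1) * 1) E p := by
      refine hp.congr ?_
      rw [inv_one, one_mul, mul_one, pw_append]; exact hf
    have s4 : Adm G (pw (E ++ (u ++ y.1)) * 1) x.1 (ct x.1) := by
      refine adm_sorted hG ?_ x.1 x.2 hx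
      rw [mul_one, pw_append, hE, pw_ew, one_mul, pw_append]; exact hf
    exact ((s1.append s2).append s3).append s4
  set v₀ : VV n := Finsupp.single ((1 : Equiv.Perm ℕ), (0 : ZIdx n → ℕ)) 1 with hv₀
  have hmain := hw x₀ y₀ hx₀G hy₀G hy₀f
  obtain ⟨e, he, hev⟩ := hmain.act 0
  set D₀ := ct y₀.1 + ct L₀.1 + p + ct x₀.1 with hD₀
  set s₀ : St n := (pw (x₀.1 ++ (E ++ (u ++ y₀.1))) * 1, 0 + D₀) with hs₀
  -- expansion
  have hexp : a * (wd E * wd u) * a = ∑ z ∈ c.support ×ˢ c.support,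
      (c z.1 * c z.2) • wd (z.1.1 ++ (E ++ (u ++ z.2.1))) := by
    rw [← hc, Finsupp.sum, Finset.sum_mul, Finset.sum_mul_sum, Finset.sum_product]
    refine Finset.sum_congr rfl fun x _ => Finset.sum_congr rfl fun y _ => ?_
    rw [wd_append, wd_append, wd_append, smul_mul_assoc, smul_mul_smul_comm]
    simp only [mul_assoc]
  have hcoef : (Φ (a * (wd E * wd u) * a) v₀) s₀ = c x₀ * c y₀ * e := by
    rw [hexp, map_sum, LinearMap.sum_apply, Finsupp.finsetSum_apply,
      Finset.sum_eq_single (x₀, y₀)]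
    · rw [map_zsmul, rep_wd hΦ, LinearMap.smul_apply, hev, Finsupp.smul_apply, Finsupp.single_eq_same,
        smul_eq_mul]
    · rintro ⟨x, y⟩ hxy hnexy
      rw [Finset.mem_product] at hxy
      rw [map_zsmul, rep_wd hΦ, LinearMap.smul_apply, Finsupp.smul_apply]
      by_cases hadm : ∃ d, Adm G 1 (x.1 ++ (E ++ (u ++ y.1))) d
      · obtain ⟨d, hd⟩ := hadm
        obtain ⟨e', -, he'⟩ := hd.act 0
        rw [hv₀, he', Finsupp.single_apply, if_neg, smul_zero]
        intro heq
        have hdD : d = D₀ := by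
          have := congrArg Prod.snd heq
          simpa [hs₀] using this
        apply hnexy
        obtain ⟨d1, dx, rfl, t1, tx⟩ := hd.split
        obtain ⟨d2, dE, rfl, t2, tE⟩ := t1.split
        obtain ⟨dy, du, rfl, ty, tu⟩ := t2.split
        have hf : ∀ k ∈ G, Mp (pw u * pw y.1) k k := by
          intro k hk
          obtain ⟨l, hl, hm, hdl⟩ :=
            (ew_adm q hq0 G.toList G.nodup_toList tE).1 k (Finset.mem_toList.2 hk)
          rw [mul_one, pw_append] at hm
          have hlk : l = k := by
            have h1 := congrFun hdD l
            simp only [hD₀, Pi.add_apply] at h1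
            rw [hdl, hpval l hl] at h1
            have b1 := ty.le l
            have b2 := tu.le l
            have b3 := tx.le l
            have b4 : ct y₀.1 l ≤ y₀.1.length := List.count_le_length
            have b5 : ct x₀.1 l ≤ x₀.1.length := List.count_le_length
            have b6 := hu.le l
            have c1 := hN x hxy.1
            have c2 := hN y hxy.2
            have c3 := hN x₀ hx₀S
            have c4 := hN y₀ hy₀S
            have h3 := arith (B := B) (b := dy l + du l + dx l) (b' := ct y₀.1 l + ct L₀.1 l + ct x₀.1 l)
              (x := Nat.pair k.1.1 k.1.2) (y := Nat.pair l.1.1 l.1.2) (by omega) (by omega)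
              (by simp only [hq] at h1; omega)
            have h4 := Nat.pair_eq_pair.1 h3
            exact idx_ext h4.1.symm h4.2.symm
          rw [hlk] at hm
          exact hm
        obtain ⟨hyG, hdy⟩ := sorted_adm hG h1fix ty y.2
        obtain ⟨hxG, hdx⟩ := sorted_adm hG (by
          rw [mul_one, pw_append, hE, pw_ew, one_mul, pw_append]; exact hf) tx x.2
        have hfin := (hd.fn (hw x y hxG hyG hf)).symm.trans hdD
        rw [hD₀] at hfin
        have hsum : ct x.1 + ct y.1 = ct x₀.1 + ct y₀.1 := by
          funext l
          have := congrFun hfin l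
          simp only [Pi.add_apply] at this ⊢
          omega
        obtain ⟨f1, f2⟩ := huniq (a := ct x.1) (b := ct y.1)
          (Finset.mem_image.2 ⟨x, Finset.mem_filter.2 ⟨hxy.1, hxG⟩, rfl⟩)
          (Finset.mem_image.2 ⟨y, Finset.mem_filter.2 ⟨hxy.2, hyG, hf⟩, rfl⟩) hsum
        exact Prod.ext (Subtype.ext (ct_inj x.2 x₀.2 f1)) (Subtype.ext (ct_inj y.2 y₀.2 f2))
      · rw [hv₀, aw_zero _ _ hadm]; simp
    · intro h
      exact absurd (Finset.mem_product.2 ⟨hx₀S, hy₀S⟩) h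
  rw [hzero, map_zero] at hcoef
  have : c x₀ * c y₀ * e ≠ 0 :=
    mul_ne_zero (mul_ne_zero (Finsupp.mem_support_iff.1 hx₀S) (Finsupp.mem_support_iff.1 hy₀S)) he
  exact this hcoef.symm

end Rep

end ZProof

/-- The ring `Z(n)` is semiprime: for every nonzero `a` there is `r`
with `a * r * a ≠ 0`. -/
theorem Zring_semiprime (n : ℕ) (hn : 2 ≤ n) :
    ∀ a : Zring n, a ≠ 0 → ∃ r : Zring n, a * r * a ≠ 0 := by
  exact fun a ha => ZProof.main a ha
end

section
/- If n ≥ 4, then the ring Z(n) is not prime: the elements a = z_{1,2} z_{n−1,n} and b = z_{2,n−1} of Z(n) are both nonzero, yet a·r·b = 0 for every r ∈ Z(n). -/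
section helpers

theorem chi_zf (n : ℕ) (S : ℕ → ℕ → Prop) [∀ i j, Decidable (S i j)] (i j : ℕ)
    (h1 : 1 ≤ i) (h2 : i < j) (h3 : j ≤ n) :
    FreeAlgebra.lift ℤ (fun p : ZIdx n => if S p.1.1 p.1.2 then (1 : ZMod 2) else 0) (zf n i j)
      = if S i j then 1 else 0 := by
  have h : 1 ≤ i ∧ i < j ∧ j ≤ n := ⟨h1, h2, h3⟩
  rw [zf, dif_pos h, FreeAlgebra.lift_ι_apply]

theorem zmod2_neg (k : ℕ) (x : ZMod 2) : ((-1 : ℤ) ^ k) • x = x := by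
  rw [zsmul_eq_mul]
  have : ((-1 : ℤ) : ZMod 2) = 1 := by decide
  rw [Int.cast_pow, this, one_pow, one_mul]

theorem chi_zf' (n : ℕ) (S : ℕ → ℕ → Prop) [∀ i j, Decidable (S i j)] (i j : ℕ)
    (h1 : 1 ≤ i) (h2 : i < j) (h3 : j ≤ n) :
    FreeAlgebra.lift ℤ (fun p : ZIdx n => if S p.1.1 p.1.2 then (1 : ZMod 2) else 0) (zf n j i)
      = if S i j then 1 else 0 := by
  have h : 1 ≤ i ∧ i < j ∧ j ≤ n := ⟨h1, h2, h3⟩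
  have h' : ¬ (1 ≤ j ∧ j < i ∧ i ≤ n) := by omega
  rw [zf, dif_neg h', dif_pos h, map_zsmul, FreeAlgebra.lift_ι_apply, zmod2_neg]

theorem exists_chi (n : ℕ) (S : ℕ → ℕ → Prop) [∀ i j, Decidable (S i j)]
    (hS : ∀ i j i' j', S i j → S i' j' → i < j → i' < j' →
      (i = i' ∧ j = j') ∨ j < i' ∨ j' < i) :
    ∃ χ : Zring n →+* ZMod 2, ∀ i j, 1 ≤ i → i < j → j ≤ n →
      χ (zElem n i j) = if S i j then 1 else 0 := by
  let f := FreeAlgebra.lift ℤ (fun p : ZIdx n => if S p.1.1 p.1.2 then (1 : ZMod 2) else 0)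
  have key : ∀ ⦃x y⦄, ZRel n x y → (f : FreeAlgebra ℤ (ZIdx n) →+* ZMod 2) x
      = (f : FreeAlgebra ℤ (ZIdx n) →+* ZMod 2) y := by
    intro x y hxy
    show f x = f y
    cases hxy with
    | contain i j i' j' h1 h2 h3 h1' h2' h3' hsub =>
      rw [Set.Icc_subset_Icc_iff h2'.le] at hsub
      rw [map_zsmul, zmod2_neg, map_mul, map_mul, chi_zf n S i j h1 h2 h3,
        chi_zf n S i' j' h1' h2' h3',
        chi_zf' n S (i + j - j') (i + j - i') (by omega) (by omega) (by omega)]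
      by_cases hij : S i j
      · by_cases e : i = i' ∧ j = j'
        · obtain ⟨rfl, rfl⟩ := e
          have e1 : i + j - j = i := by omega
          have e2 : i + j - i = j := by omega
          rw [e1, e2]
        · have a1 : ¬ S i' j' := fun h => by
            have := hS _ _ _ _ hij h h2 h2'
            omega
          have a2 : ¬ S (i + j - j') (i + j - i') := fun h => by
            have := hS _ _ _ _ hij h h2 (by omega)
            omega
          simp [a1, a2]
      · simp [hij]
    | disj i j i' j' h1 h2 h3 h1' h2' h3' hd =>
      rw [map_zsmul, zmod2_neg, map_mul, map_mul, mul_comm]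
    | overlap i j i' j' h1 h2 h3 h1' h2' h3' hne hnc1 hnc2 =>
      obtain ⟨x, ⟨hx1, hx2⟩, hx3, hx4⟩ := hne
      rw [map_mul, map_zero, chi_zf n S i j h1 h2 h3, chi_zf n S i' j' h1' h2' h3']
      by_cases a : S i j
      · by_cases b : S i' j'
        · rcases hS _ _ _ _ a b h2 h2' with ⟨rfl, rfl⟩ | h
          · exact absurd le_rfl hnc1
          · omega
        · simp [b]
      · simp [a]
  refine ⟨RingQuot.lift ⟨(f : FreeAlgebra ℤ (ZIdx n) →+* ZMod 2), key⟩, ?_⟩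
  intro i j h1 h2 h3
  rw [zElem, RingQuot.lift_mkRingHom_apply]
  exact chi_zf n S i j h1 h2 h3

theorem zElem_contain (n i j i' j' : ℕ) (h1 : 1 ≤ i) (h3 : j ≤ n)
    (h2' : i' < j') (hi : i ≤ i') (hj : j' ≤ j) :
    ∃ s : ℤ, s * s = 1 ∧ zElem n i j * zElem n i' j' =
      s • (zElem n (i + j - j') (i + j - i') * zElem n i j) := by
  have h := RingQuot.mkRingHom_rel (ZRel.contain (n := n) i j i' j' h1 (by omega) h3 (by omega) h2'
    (by omega) (Set.Icc_subset_Icc hi hj))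
  have e : zf n (i + j - i') (i + j - j') =
      ((-1 : ℤ) ^ ((i + j - i') - (i + j - j'))) • zf n (i + j - j') (i + j - i') := by
    rw [zf, dif_neg (by omega), dif_pos (by omega), zf, dif_pos (by omega)]
  rw [e, map_mul, smul_mul_assoc, smul_smul, map_zsmul, map_mul] at h
  refine ⟨_, ?_, h⟩
  rw [← pow_add, ← mul_pow]
  simp

theorem zElem_contain' (n i j i' j' : ℕ) (h1 : 1 ≤ i) (h3 : j ≤ n)
    (h2' : i' < j') (hi : i ≤ i') (hj : j' ≤ j) :
    ∃ s : ℤ, zElem n i' j' * zElem n i j =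
      s • (zElem n i j * zElem n (i + j - j') (i + j - i')) := by
  obtain ⟨s, hs, h⟩ := zElem_contain n i j (i + j - j') (i + j - i') h1 h3 (by omega) (by omega)
    (by omega)
  refine ⟨s, ?_⟩
  have e1 : i + j - (i + j - j') = j' := by omega
  have e2 : i + j - (i + j - i') = i' := by omega
  rw [h, smul_smul, hs, one_smul, e1, e2]

theorem zElem_disj (n i j i' j' : ℕ) (h1 : 1 ≤ i) (h2 : i < j) (h3 : j ≤ n)
    (h1' : 1 ≤ i') (h2' : i' < j') (h3' : j' ≤ n) (hd : j < i' ∨ j' < i) :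
    ∃ s : ℤ, zElem n i j * zElem n i' j' = s • (zElem n i' j' * zElem n i j) := by
  have h := RingQuot.mkRingHom_rel (ZRel.disj (n := n) i j i' j' h1 h2 h3 h1' h2' h3' (by
    ext x; simp only [Set.mem_inter_iff, Set.mem_Icc, Set.mem_empty_iff_false, iff_false]; omega))
  rw [map_mul, map_zsmul, map_mul] at h
  exact ⟨_, h⟩

theorem zElem_overlap (n i j i' j' : ℕ) (h1 : 1 ≤ i) (h2 : i < j) (h3 : j ≤ n)
    (h1' : 1 ≤ i') (h2' : i' < j') (h3' : j' ≤ n)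
    (hd : (i < i' ∧ i' ≤ j ∧ j < j') ∨ (i' < i ∧ i ≤ j' ∧ j' < j)) :
    zElem n i j * zElem n i' j' = 0 := by
  have h := RingQuot.mkRingHom_rel (ZRel.overlap (n := n) i j i' j' h1 h2 h3 h1' h2' h3'
    (by
      rcases hd with hd | hd
      · exact ⟨i', by simp only [Set.mem_inter_iff, Set.mem_Icc]; omega⟩
      · exact ⟨i, by simp only [Set.mem_inter_iff, Set.mem_Icc]; omega⟩)
    (by rw [Set.Icc_subset_Icc_iff h2'.le]; omega)
    (by rw [Set.Icc_subset_Icc_iff h2.le]; omega))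
  rw [map_mul, map_zero] at h
  exact h

/-- The right ideal generated by `b` and two auxiliary products; it is in fact two-sided. -/
def InR (n : ℕ) (x : Zring n) : Prop :=
  ∃ u v w : Zring n, x = zElem n 2 (n - 1) * u
    + zElem n 1 (n - 2) * (zElem n 1 (n - 1) * v) + zElem n 3 n * (zElem n 2 n * w)

theorem InR.add {n : ℕ} {x y : Zring n} (hx : InR n x) (hy : InR n y) : InR n (x + y) := by
  obtain ⟨u, v, w, rfl⟩ := hx
  obtain ⟨u', v', w', rfl⟩ := hy
  exact ⟨u + u', v + v', w + w', by simp only [mul_add]; abel⟩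

theorem InR.smul {n : ℕ} {x : Zring n} (s : ℤ) (hx : InR n x) : InR n (s • x) := by
  obtain ⟨u, v, w, rfl⟩ := hx
  exact ⟨s • u, s • v, s • w, by
    simp only [mul_smul_comm]
    erw [smul_add, smul_add]
    rfl⟩

theorem InR.zero (n : ℕ) : InR n 0 := ⟨0, 0, 0, by simp⟩
theorem InR.b (n : ℕ) (u : Zring n) : InR n (zElem n 2 (n - 1) * u) := ⟨u, 0, 0, by simp⟩
theorem InR.c (n : ℕ) (u : Zring n) :
    InR n (zElem n 1 (n - 2) * (zElem n 1 (n - 1) * u)) := ⟨0, u, 0, by simp⟩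
theorem InR.d (n : ℕ) (u : Zring n) :
    InR n (zElem n 3 n * (zElem n 2 n * u)) := ⟨0, 0, u, by simp⟩

/-- Push a relation through a left factor. -/
theorem push {A : Type*} [Ring A] {x y x' y' : A} {s : ℤ} (h : x * y = s • (x' * y')) (u : A) :
    x * (y * u) = s • (x' * (y' * u)) := by
  rw [← mul_assoc, h, smul_mul_assoc, mul_assoc]

theorem push0 {A : Type*} [Ring A] {x y : A} (h : x * y = 0) (u : A) :
    x * (y * u) = 0 := by
  rw [← mul_assoc, h, zero_mul]

theorem InR.gen {n : ℕ} (hn : 4 ≤ n) (p q : ℕ) (h1 : 1 ≤ p) (h2 : p < q) (h3 : q ≤ n)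
    {x : Zring n} (hx : InR n x) : InR n (zElem n p q * x) := by
  obtain ⟨u, v, w, rfl⟩ := hx
  rw [mul_add, mul_add]
  refine (InR.add ?_ ?_).add ?_
  · by_cases c1 : 2 ≤ p ∧ q ≤ n - 1
    · obtain ⟨s, h⟩ := zElem_contain' n 2 (n - 1) p q (by omega) (by omega) h2 c1.1 c1.2
      rw [push h]
      exact (InR.b n _).smul s
    by_cases c2 : p ≤ 2 ∧ n - 1 ≤ q
    · obtain ⟨s, -, h⟩ := zElem_contain n p q 2 (n - 1) h1 h3 (by omega) c2.1 c2.2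
      rw [push h]
      apply InR.smul
      by_cases p1 : p = 1
      · by_cases q1 : q = n
        · subst p1 q1
          have e1 : 1 + q - (q - 1) = 2 := by omega
          have e2 : 1 + q - 2 = q - 1 := by omega
          rw [e1, e2]
          exact InR.b _ _
        · obtain rfl : q = n - 1 := by omega
          subst p1
          have e1 : 1 + (n - 1) - (n - 1) = 1 := by omega
          have e2 : 1 + (n - 1) - 2 = n - 2 := by omega
          rw [e1, e2]
          exact InR.c _ _
      · obtain rfl : p = 2 := by omega
        obtain rfl : q = n := by omega
        have e1 : 2 + q - (q - 1) = 3 := by omega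
        have e2 : 2 + q - 2 = q := by omega
        rw [e1, e2]
        exact InR.d _ _
    rw [push0 (zElem_overlap n p q 2 (n - 1) h1 h2 h3 (by omega) (by omega) (by omega) (by omega))]
    exact InR.zero n
  · by_cases c1 : q ≤ n - 2
    · obtain ⟨s, h⟩ := zElem_contain' n 1 (n - 2) p q (by omega) (by omega) h2 h1 c1
      obtain ⟨t, h'⟩ := zElem_contain' n 1 (n - 1) (1 + (n - 2) - q) (1 + (n - 2) - p)
        (by omega) (by omega) (by omega) (by omega) (by omega)
      rw [push h, push h', mul_smul_comm]
      exact ((InR.c n _).smul t).smul s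
    by_cases c2 : p = n - 1
    · obtain ⟨s, h⟩ := zElem_disj n p q 1 (n - 2) h1 h2 h3 (by omega) (by omega) (by omega)
        (by omega)
      rw [push h, push0 (zElem_overlap n p q 1 (n - 1) h1 h2 h3 (by omega) (by omega) (by omega)
        (by omega)), mul_zero]
      exact (InR.zero n).smul s
    by_cases c3 : p = 1
    · subst c3
      obtain ⟨s, -, h⟩ := zElem_contain n 1 q 1 (n - 2) h1 h3 (by omega) (by omega) (by omega)
      rw [push h]
      apply InR.smul
      by_cases q1 : q = n
      · subst q1
        obtain ⟨s, -, h'⟩ := zElem_contain q 1 q 1 (q - 1) h1 h3 (by omega) (by omega) (by omega)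
        rw [push h', mul_smul_comm]
        apply InR.smul
        have e1 : 1 + q - (q - 2) = 3 := by omega
        have e2 : 1 + q - 1 = q := by omega
        have e3 : 1 + q - (q - 1) = 2 := by omega
        rw [e1, e2, e3]
        exact InR.d _ _
      · obtain rfl : q = n - 1 := by omega
        have e1 : 1 + (n - 1) - (n - 2) = 2 := by omega
        have e2 : 1 + (n - 1) - 1 = n - 1 := by omega
        rw [e1, e2]
        exact InR.b _ _
    rw [push0 (zElem_overlap n p q 1 (n - 2) h1 h2 h3 (by omega) (by omega) (by omega) (by omega))]
    exact InR.zero n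
  · by_cases c1 : 3 ≤ p
    · obtain ⟨s, h⟩ := zElem_contain' n 3 n p q (by omega) (by omega) h2 c1 h3
      obtain ⟨t, h'⟩ := zElem_contain' n 2 n (3 + n - q) (3 + n - p)
        (by omega) (by omega) (by omega) (by omega) (by omega)
      rw [push h, push h', mul_smul_comm]
      exact ((InR.d n _).smul t).smul s
    by_cases c2 : q = 2
    · obtain ⟨s, h⟩ := zElem_disj n p q 3 n h1 h2 h3 (by omega) (by omega) (by omega)
        (by omega)
      rw [push h, push0 (zElem_overlap n p q 2 n h1 h2 h3 (by omega) (by omega) (by omega)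
        (by omega)), mul_zero]
      exact (InR.zero n).smul s
    by_cases c3 : q = n
    · subst c3
      obtain ⟨s, -, h⟩ := zElem_contain q p q 3 q h1 h3 (by omega) (by omega) (by omega)
      rw [push h]
      apply InR.smul
      by_cases p1 : p = 1
      · subst p1
        obtain ⟨s, -, h'⟩ := zElem_contain q 1 q 2 q h1 h3 (by omega) (by omega) (by omega)
        rw [push h', mul_smul_comm]
        apply InR.smul
        have e1 : 1 + q - q = 1 := by omega
        have e2 : 1 + q - 3 = q - 2 := by omega
        have e3 : 1 + q - 2 = q - 1 := by omega
        rw [e1, e2, e3]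
        exact InR.c _ _
      · obtain rfl : p = 2 := by omega
        have e1 : 2 + q - q = 2 := by omega
        have e2 : 2 + q - 3 = q - 1 := by omega
        rw [e1, e2]
        exact InR.b _ _
    rw [push0 (zElem_overlap n p q 3 n h1 h2 h3 (by omega) (by omega) (by omega) (by omega))]
    exact InR.zero n

theorem InR.left {n : ℕ} (hn : 4 ≤ n) (r : FreeAlgebra ℤ (ZIdx n)) :
    ∀ x : Zring n, InR n x → InR n (RingQuot.mkRingHom (ZRel n) r * x) := by
  induction r using FreeAlgebra.induction with
  | grade0 k =>
    intro x hx
    have : RingQuot.mkRingHom (ZRel n) (algebraMap ℤ (FreeAlgebra ℤ (ZIdx n)) k) = (k : Zring n) := by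
      simp
    rw [this, ← zsmul_eq_mul]
    exact hx.smul k
  | grade1 p =>
    intro x hx
    obtain ⟨⟨p, q⟩, h⟩ := p
    have := InR.gen hn p q h.1 h.2.1 h.2.2 hx
    rwa [zElem, zf, dif_pos h] at this
  | mul a b ha hb =>
    intro x hx
    rw [map_mul, mul_assoc]
    exact ha _ (hb _ hx)
  | add a b ha hb =>
    intro x hx
    rw [map_add, add_mul]
    exact (ha _ hx).add (hb _ hx)

theorem a_mul_InR {n : ℕ} (hn : 4 ≤ n) {x : Zring n} (hx : InR n x) :
    zElem n 1 2 * (zElem n (n - 1) n * x) = 0 := by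
  obtain ⟨u, v, w, rfl⟩ := hx
  obtain ⟨s, h⟩ := zElem_disj n (n - 1) n 1 (n - 2) (by omega) (by omega) (by omega)
    (by omega) (by omega) (by omega) (by omega)
  obtain ⟨t, h'⟩ := zElem_disj n 1 2 (n - 1) n (by omega) (by omega) (by omega)
    (by omega) (by omega) (by omega) (by omega)
  obtain ⟨t', h''⟩ := zElem_disj n 1 2 3 n (by omega) (by omega) (by omega)
    (by omega) (by omega) (by omega) (by omega)
  have o1 := zElem_overlap n (n - 1) n 2 (n - 1) (by omega) (by omega) (by omega)
    (by omega) (by omega) (by omega) (by omega)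
  have o2 := zElem_overlap n (n - 1) n 1 (n - 1) (by omega) (by omega) (by omega)
    (by omega) (by omega) (by omega) (by omega)
  have o3 := zElem_overlap n 1 2 2 n (by omega) (by omega) (by omega)
    (by omega) (by omega) (by omega) (by omega)
  simp only [mul_add]
  rw [push0 o1, push h, push0 o2, push h', push h'', push0 o3]
  simp

end helpers

/-- For `n ≥ 4` the ring `Z(n)` is not prime: `a = z_{1,2} z_{n-1,n}` and
`b = z_{2,n-1}` are nonzero but `a * r * b = 0` for every `r`. -/
theorem Zring_not_prime (n : ℕ) (hn : 4 ≤ n) :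
    zElem n 1 2 * zElem n (n - 1) n ≠ 0 ∧
    zElem n 2 (n - 1) ≠ 0 ∧
    ∀ r : Zring n, (zElem n 1 2 * zElem n (n - 1) n) * r * zElem n 2 (n - 1) = 0 := by
  refine ⟨?_, ?_, ?_⟩
  · obtain ⟨χ, hχ⟩ := exists_chi n (fun i j => (i = 1 ∧ j = 2) ∨ (i = n - 1 ∧ j = n)) (by
      intro i j i' j' h h' _ _
      omega)
    intro h0
    have := congrArg χ h0
    rw [map_mul, map_zero, hχ 1 2 (by omega) (by omega) (by omega),
      hχ (n - 1) n (by omega) (by omega) (by omega)] at this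
    simp at this
  · obtain ⟨χ, hχ⟩ := exists_chi n (fun i j => i = 2 ∧ j = n - 1) (by
      intro i j i' j' h h' _ _
      omega)
    intro h0
    have := congrArg χ h0
    rw [map_zero, hχ 2 (n - 1) (by omega) (by omega) (by omega)] at this
    simp at this
  · intro r
    obtain ⟨r, rfl⟩ := RingQuot.mkRingHom_surjective (ZRel n) r
    rw [mul_assoc, mul_assoc]
    apply a_mul_InR hn
    apply InR.left hn
    simpa using InR.b n 1
end

section
/- For n = 3, the ring Z(3) is prime: for all nonzero elements a, b of Z(3) there exists r ∈ Z(3) such that a·r·b ≠ 0. (Here Z(3) is generated by x = z_{1,2}, y = z_{2,3}, z = z_{1,3} with relations xy = yx = 0, xz + zy = 0, yz + zx = 0.) -/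
namespace ZThree

open Matrix

abbrev R := MvPolynomial (Fin 2) ℤ

noncomputable def s : R := MvPolynomial.X 0
noncomputable def t : R := MvPolynomial.X 1

noncomputable def mx : Matrix (Fin 2) (Fin 2) R := !![s, 0; 0, 0]
noncomputable def my : Matrix (Fin 2) (Fin 2) R := !![0, 0; 0, -s]
noncomputable def mz : Matrix (Fin 2) (Fin 2) R := !![0, 1; t, 0]

noncomputable def gen (p : ZIdx 3) : Matrix (Fin 2) (Fin 2) R :=
  if p.1 = (1, 2) then mx else if p.1 = (2, 3) then my else mz

noncomputable def phi0 : FreeAlgebra ℤ (ZIdx 3) →ₐ[ℤ] Matrix (Fin 2) (Fin 2) R :=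
  FreeAlgebra.lift ℤ gen

lemma phi0_12 : phi0 (zf 3 1 2) = mx := by simp [zf, phi0, gen]
lemma phi0_23 : phi0 (zf 3 2 3) = my := by simp [zf, phi0, gen]
lemma phi0_13 : phi0 (zf 3 1 3) = mz := by simp [zf, phi0, gen]
lemma phi0_21 : phi0 (zf 3 2 1) = -mx := by simp [zf, phi0, gen]
lemma phi0_32 : phi0 (zf 3 3 2) = -my := by simp [zf, phi0, gen]
lemma phi0_31 : phi0 (zf 3 3 1) = mz := by simp [zf, phi0, gen]

lemma mxy : mx * my = 0 := by
  ext i j; fin_cases i <;> fin_cases j <;> simp [mx, my]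
lemma myx : my * mx = 0 := by
  ext i j; fin_cases i <;> fin_cases j <;> simp [mx, my]
lemma mzx : mz * mx = -(my * mz) := by simp [mx, my, mz, mul_comm]
lemma mzy : mz * my = -(mx * mz) := by simp [mx, my, mz]

lemma pairs {i j : ℕ} (h1 : 1 ≤ i) (h2 : i < j) (h3 : j ≤ 3) :
    (i = 1 ∧ j = 2) ∨ (i = 2 ∧ j = 3) ∨ (i = 1 ∧ j = 3) := by omega

lemma phi0_rel {a b : FreeAlgebra ℤ (ZIdx 3)} (h : ZRel 3 a b) : phi0 a = phi0 b := by
  cases h with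
  | contain i j i' j' h1 h2 h3 h1' h2' h3' hsub =>
    rw [Set.Icc_subset_Icc_iff h2'.le] at hsub
    rcases pairs h1 h2 h3 with ⟨rfl, rfl⟩ | ⟨rfl, rfl⟩ | ⟨rfl, rfl⟩ <;>
    rcases pairs h1' h2' h3' with ⟨rfl, rfl⟩ | ⟨rfl, rfl⟩ | ⟨rfl, rfl⟩ <;>
    first
    | (exfalso; omega)
    | simp [phi0_12, phi0_23, phi0_13, phi0_21, phi0_32, phi0_31, mzx, mzy]
  | disj i j i' j' h1 h2 h3 h1' h2' h3' hd =>
    exfalso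
    have : (2 : ℕ) ∈ Set.Icc i j ∩ Set.Icc i' j' := by
      simp only [Set.mem_inter_iff, Set.mem_Icc]; omega
    rw [hd] at this
    exact this
  | overlap i j i' j' h1 h2 h3 h1' h2' h3' hne hnc1 hnc2 =>
    rw [Set.Icc_subset_Icc_iff h2'.le] at hnc1
    rw [Set.Icc_subset_Icc_iff h2.le] at hnc2
    rcases pairs h1 h2 h3 with ⟨rfl, rfl⟩ | ⟨rfl, rfl⟩ | ⟨rfl, rfl⟩ <;>
    rcases pairs h1' h2' h3' with ⟨rfl, rfl⟩ | ⟨rfl, rfl⟩ | ⟨rfl, rfl⟩ <;>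
    first
    | (exfalso; omega)
    | simp [phi0_12, phi0_23, mxy, myx]

noncomputable def phi : Zring 3 →+* Matrix (Fin 2) (Fin 2) R :=
  RingQuot.lift ⟨(phi0 : FreeAlgebra ℤ (ZIdx 3) →+* Matrix (Fin 2) (Fin 2) R),
    fun _ _ h => phi0_rel h⟩

noncomputable def x : Zring 3 := zElem 3 1 2
noncomputable def y : Zring 3 := zElem 3 2 3
noncomputable def z : Zring 3 := zElem 3 1 3

lemma phi_x : phi x = mx := by
  rw [phi, x, zElem]; exact (RingQuot.lift_mkRingHom_apply _ _ _).trans phi0_12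
lemma phi_y : phi y = my := by
  rw [phi, y, zElem]; exact (RingQuot.lift_mkRingHom_apply _ _ _).trans phi0_23
lemma phi_z : phi z = mz := by
  rw [phi, z, zElem]; exact (RingQuot.lift_mkRingHom_apply _ _ _).trans phi0_13

lemma xy : x * y = 0 := by
  have := RingQuot.mkRingHom_rel (ZRel.overlap (n := 3) 1 2 2 3 (by simp) (by simp) (by simp)
    (by simp) (by simp) (by simp) ⟨2, by simp⟩
    (by rw [Set.Icc_subset_Icc_iff (by simp)]; simp)
    (by rw [Set.Icc_subset_Icc_iff (by simp)]; simp))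
  simpa [x, y, zElem] using this

lemma yx : y * x = 0 := by
  have := RingQuot.mkRingHom_rel (ZRel.overlap (n := 3) 2 3 1 2 (by simp) (by simp) (by simp)
    (by simp) (by simp) (by simp) ⟨2, by simp⟩
    (by rw [Set.Icc_subset_Icc_iff (by simp)]; simp)
    (by rw [Set.Icc_subset_Icc_iff (by simp)]; simp))
  simpa [x, y, zElem] using this

lemma zf_32 : zf 3 3 2 = - zf 3 2 3 := by simp [zf]
lemma zf_21 : zf 3 2 1 = - zf 3 1 2 := by simp [zf]

lemma zx : z * x = -(y * z) := by
  have := RingQuot.mkRingHom_rel (ZRel.contain (n := 3) 1 3 1 2 (by simp) (by simp) (by simp)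
    (by simp) (by simp) (by simp) (by rw [Set.Icc_subset_Icc_iff (by simp)]; simp))
  simpa [x, y, z, zElem, zf_32] using this

lemma zy : z * y = -(x * z) := by
  have := RingQuot.mkRingHom_rel (ZRel.contain (n := 3) 1 3 2 3 (by simp) (by simp) (by simp)
    (by simp) (by simp) (by simp) (by rw [Set.Icc_subset_Icc_iff (by simp)]; simp))
  simpa [x, y, z, zElem, zf_21] using this

lemma mulneg (a b : Zring 3) : a * -b = -(a * b) := mul_neg a b
lemma negmul (a b : Zring 3) : -a * b = -(a * b) := neg_mul a b

lemma neg_even {m : ℕ} (h : Even m) (a : Zring 3) : (-a) ^ m = a ^ m := h.neg_pow a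
lemma neg_odd {m : ℕ} (h : Odd m) (a : Zring 3) : (-a) ^ m = -a ^ m := h.neg_pow a

lemma zxm (m : ℕ) : z * x ^ m = (-y) ^ m * z := by
  induction m with
  | zero => simp
  | succ m ih => rw [pow_succ, ← mul_assoc, ih, mul_assoc, zx, pow_succ, mul_assoc, mulneg, negmul, mulneg]

lemma zym (m : ℕ) : z * y ^ m = (-x) ^ m * z := by
  induction m with
  | zero => simp
  | succ m ih => rw [pow_succ, ← mul_assoc, ih, mul_assoc, zy, pow_succ, mul_assoc, mulneg, negmul, mulneg]

/-- Normal words. -/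
def W : Set (Zring 3) :=
  {w | (∃ m k : ℕ, w = x ^ m * z ^ k) ∨ ∃ m k : ℕ, w = y ^ (m + 1) * z ^ k}

def N : AddSubgroup (Zring 3) := AddSubgroup.closure W

lemma Nx (m k : ℕ) : x ^ m * z ^ k ∈ N := AddSubgroup.subset_closure (Or.inl ⟨m, k, rfl⟩)
lemma Ny (m k : ℕ) : y ^ m * z ^ k ∈ N := by
  cases m with
  | zero => simpa using Nx 0 k
  | succ m => exact AddSubgroup.subset_closure (Or.inr ⟨m, k, rfl⟩)

lemma Nneg {a b : Zring 3} (m : ℕ) (h : a ^ m * b ∈ N) : (-a) ^ m * b ∈ N := by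
  rcases Nat.even_or_odd m with h' | h'
  · rw [neg_even h']; exact h
  · rw [neg_odd h', negmul]; exact N.neg_mem h

lemma closed (g : Zring 3) (hx : ∀ m k, g * (x ^ m * z ^ k) ∈ N)
    (hy : ∀ m k, g * (y ^ (m + 1) * z ^ k) ∈ N) {a : Zring 3} (ha : a ∈ N) : g * a ∈ N := by
  induction ha using AddSubgroup.closure_induction with
  | mem w hw =>
    rcases hw with ⟨m, k, rfl⟩ | ⟨m, k, rfl⟩
    · exact hx m k
    · exact hy m k
  | zero => simpa using N.zero_mem
  | add a b _ _ ha hb => rw [mul_add]; exact N.add_mem ha hb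
  | neg a _ ha => have := N.neg_mem ha; rw [← mulneg] at this; exact this

lemma closed_x {a : Zring 3} (ha : a ∈ N) : x * a ∈ N := by
  refine closed x (fun m k => ?_) (fun m k => ?_) ha
  · rw [← mul_assoc, ← pow_succ']; exact Nx _ _
  · rw [pow_succ', ← mul_assoc, ← mul_assoc, xy]; simpa using N.zero_mem

lemma closed_y {a : Zring 3} (ha : a ∈ N) : y * a ∈ N := by
  refine closed y (fun m k => ?_) (fun m k => ?_) ha
  · cases m with
    | zero => simpa using Ny 1 k
    | succ m => rw [pow_succ', ← mul_assoc, ← mul_assoc, yx]; simpa using N.zero_mem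
  · rw [← mul_assoc, ← pow_succ']; exact Ny _ _

lemma closed_z {a : Zring 3} (ha : a ∈ N) : z * a ∈ N := by
  refine closed z (fun m k => ?_) (fun m k => ?_) ha
  · rw [← mul_assoc, zxm, mul_assoc, ← pow_succ']; exact Nneg _ (Ny _ _)
  · rw [← mul_assoc, zym, mul_assoc, ← pow_succ']; exact Nneg _ (Nx _ _)

lemma mk_mul_mem (f : FreeAlgebra ℤ (ZIdx 3)) :
    ∀ a ∈ N, RingQuot.mkRingHom (ZRel 3) f * a ∈ N := by
  induction f using FreeAlgebra.induction with
  | grade0 r =>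
    intro a ha
    simpa using N.zsmul_mem ha r
  | grade1 p =>
    intro a ha
    obtain ⟨⟨i, j⟩, h1, h2, h3⟩ := p
    dsimp only at h1 h2 h3
    have e : FreeAlgebra.ι ℤ (⟨(i, j), h1, h2, h3⟩ : ZIdx 3) = zf 3 i j := by
      rw [zf, dif_pos ⟨h1, h2, h3⟩]
    rw [e]
    rcases pairs h1 h2 h3 with ⟨rfl, rfl⟩ | ⟨rfl, rfl⟩ | ⟨rfl, rfl⟩
    · exact closed_x ha
    · exact closed_y ha
    · exact closed_z ha
  | mul f g hf hg =>
    intro a ha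
    rw [map_mul, mul_assoc]
    exact hf _ (hg _ ha)
  | add f g hf hg =>
    intro a ha
    rw [map_add, add_mul]
    exact N.add_mem (hf _ ha) (hg _ ha)

lemma mem_N (a : Zring 3) : a ∈ N := by
  obtain ⟨f, rfl⟩ := RingQuot.mkRingHom_surjective (ZRel 3) a
  simpa using mk_mul_mem f 1 (by simpa using Nx 0 0)

/-- Additive map on polynomials prescribed on monomials. -/
noncomputable def F (f : ℕ → ℕ → Zring 3) : R →ₗ[ℤ] Zring 3 :=
  (MvPolynomial.basisMonomials (Fin 2) ℤ).constr ℤ (fun d => f (d 0) (d 1))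

lemma F_apply (f : ℕ → ℕ → Zring 3) (m k : ℕ) : F f (s ^ m * t ^ k) = f m k := by
  have : s ^ m * t ^ k = MvPolynomial.basisMonomials (Fin 2) ℤ
      (Finsupp.single 0 m + Finsupp.single 1 k) := by
    simp [s, t, MvPolynomial.X_pow_eq_monomial, MvPolynomial.monomial_mul]
  rw [this, F, Module.Basis.constr_basis]
  simp

lemma F_applyt (f : ℕ → ℕ → Zring 3) (k : ℕ) : F f (t ^ k) = f 0 k := by
  simpa using F_apply f 0 k

lemma F_neg (f : ℕ → ℕ → Zring 3) (m k : ℕ) : F f ((-s) ^ m * t ^ k) = (-1) ^ m * f m k := by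
  rcases Nat.even_or_odd m with h | h
  · rw [h.neg_pow, neg_even h, F_apply, one_pow, one_mul]
  · rw [h.neg_pow, neg_odd h, neg_mul, map_neg, F_apply, one_pow, negmul, one_mul]

noncomputable def psi (M : Matrix (Fin 2) (Fin 2) R) : Zring 3 :=
  F (fun m k => x ^ m * z ^ (2 * k)) (M 0 0)
  + F (fun m k => x ^ m * z ^ (2 * k + 1)) (M 0 1)
  + F (fun m k => if m = 0 then 0 else (-1) ^ m * (y ^ m * z ^ (2 * k - 1))) (M 1 0)
  + F (fun m k => if m = 0 then 0 else (-1) ^ m * (y ^ m * z ^ (2 * k))) (M 1 1)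

lemma mz_even (k : ℕ) : mz ^ (2 * k) = !![t ^ k, 0; 0, t ^ k] := by
  induction k with
  | zero => simp [Matrix.one_fin_two]
  | succ k ih => 
    rw [show 2 * (k + 1) = 2 * k + 1 + 1 by ring, pow_succ, pow_succ, ih]
    simp [mz, pow_succ]

lemma mz_odd (k : ℕ) : mz ^ (2 * k + 1) = !![0, t ^ k; t ^ (k + 1), 0] := by
  rw [pow_succ, mz_even]; simp [mz, pow_succ]

lemma mx_pow (m : ℕ) : mx ^ (m + 1) = !![s ^ (m + 1), 0; 0, 0] := by
  induction m with
  | zero => simp [mx]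
  | succ m ih => rw [pow_succ, ih]; ext i j; fin_cases i <;> fin_cases j <;> simp [mx, pow_succ]

lemma my_pow (m : ℕ) : my ^ (m + 1) = !![0, 0; 0, (-s) ^ (m + 1)] := by
  induction m with
  | zero => simp [my]
  | succ m ih => rw [pow_succ, ih]; ext i j; fin_cases i <;> fin_cases j <;> simp [my, pow_succ]

lemma psi_phi_word {w : Zring 3} (hw : w ∈ W) : psi (phi w) = w := by
  have sg : ∀ (m : ℕ) (a : Zring 3), (-1) ^ m * ((-1) ^ m * a) = a := by
    intro m a
    rcases Nat.even_or_odd m with h | h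
    · rw [neg_even h]; simp
    · rw [neg_odd h, one_pow, negmul, negmul, one_mul, neg_neg, one_mul]
  rcases hw with ⟨m, k, rfl⟩ | ⟨m, k, rfl⟩ <;>
    rw [map_mul, map_pow, map_pow, phi_z] <;>
    obtain ⟨k, rfl | rfl⟩ := Nat.even_or_odd' k
  · rw [phi_x, mz_even]
    cases m with
    | zero => simp [psi, F_applyt]
    | succ m => rw [mx_pow]; simp [psi, F_apply]
  · rw [phi_x, mz_odd]
    cases m with
    | zero => simp [psi, F_applyt]
    | succ m => rw [mx_pow]; simp [psi, F_apply]
  · rw [phi_y, mz_even, my_pow]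
    simp [psi, F_neg, sg]
  · rw [phi_y, mz_odd, my_pow]
    simp [psi, F_neg, sg, show 2 * (k + 1) - 1 = 2 * k + 1 by omega]

lemma psi_phi (a : Zring 3) : psi (phi a) = a := by
  have ha := mem_N a
  induction ha using AddSubgroup.closure_induction with
  | mem w hw => exact psi_phi_word hw
  | zero => simp [psi]
  | add a b _ _ ha hb =>
    conv_rhs => rw [← ha, ← hb]
    simp only [psi, map_add, Matrix.add_apply]; abel
  | neg a _ ha =>
    conv_rhs => rw [← ha]
    simp only [psi, map_neg, Matrix.neg_apply]; abel

lemma phi_inj : Function.Injective phi := fun a b h => by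
  rw [← psi_phi a, h, psi_phi]

lemma unit_mem (j k : Fin 2) :
    ∃ (r : Zring 3) (c : R), c ≠ 0 ∧ phi r = Matrix.single j k c := by
  have hs : s ≠ 0 := MvPolynomial.X_ne_zero _
  have ht : t ≠ 0 := MvPolynomial.X_ne_zero _
  fin_cases j <;> fin_cases k
  · refine ⟨x, s, hs, ?_⟩
    rw [phi_x]; ext i j; fin_cases i <;> fin_cases j <;> simp [mx, Matrix.single]
  · refine ⟨x * z, s, hs, ?_⟩
    rw [map_mul, phi_x, phi_z]
    ext i j; fin_cases i <;> fin_cases j <;> simp [mx, mz, Matrix.single]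
  · refine ⟨y * z, -s * t, mul_ne_zero (neg_ne_zero.2 hs) ht, ?_⟩
    rw [map_mul, phi_y, phi_z]
    ext i j; fin_cases i <;> fin_cases j <;> simp [my, mz, Matrix.single]
  · refine ⟨y, -s, neg_ne_zero.2 hs, ?_⟩
    rw [phi_y]; ext i j; fin_cases i <;> fin_cases j <;> simp [my, Matrix.single]

lemma exists_entry {a : Zring 3} (ha : a ≠ 0) : ∃ i j, phi a i j ≠ 0 := by
  by_contra! h
  apply ha
  apply phi_inj
  rw [map_zero]
  ext1 i j
  exact h i j

end ZThree

/-- The ring `Z(3)` is prime: for all nonzero `a, b` there is `r`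
with `a * r * b ≠ 0`. -/
theorem Zring_three_prime :
    ∀ a b : Zring 3, a ≠ 0 → b ≠ 0 → ∃ r : Zring 3, a * r * b ≠ 0 := by
  intro a b ha hb
  obtain ⟨i, j, hij⟩ := ZThree.exists_entry ha
  obtain ⟨k, l, hkl⟩ := ZThree.exists_entry hb
  obtain ⟨r, c, hc, hr⟩ := ZThree.unit_mem j k
  refine ⟨r, fun h => ?_⟩
  have h2 : (ZThree.phi a * Matrix.single j k c * ZThree.phi b) i l = 0 := by
    rw [← hr, ← map_mul, ← map_mul, h, map_zero]; rfl
  have h3 : (ZThree.phi a * Matrix.single j k c * ZThree.phi b) i l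
      = ZThree.phi a i j * c * ZThree.phi b k l := by
    rw [Matrix.mul_apply, Finset.sum_eq_single k]
    · simp
    · intro q _ hq
      rw [Matrix.mul_single_apply_of_ne _ _ _ _ _ hq]; simp
    · simp
  rw [h3] at h2
  exact mul_ne_zero (mul_ne_zero hij hc) hkl h2
end

section
/- Let n = 4 and write u = z_{1,2}, v = z_{2,3}, w = z_{3,4}, x = z_{1,3}, y = z_{2,4} in Z(4). Let I₁ be the two-sided ideal of Z(4) generated by uw, and let I₂ be the two-sided ideal generated by {v, x, y}. Then I₁ ∩ I₂ = {0}; equivalently, the natural ring homomorphism Z(4) → Z(4)/I₁ × Z(4)/I₂ is injective. -/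
namespace ZFour

abbrev M := (ℕ × ℕ × ℕ) →₀ ℤ

noncomputable def e (a b d : ℕ) : M := Finsupp.single (a, b, d) 1

noncomputable def U : Module.End ℤ M :=
  Finsupp.linearCombination ℤ (fun p : ℕ × ℕ × ℕ => e (p.1 + 1) p.2.1 p.2.2)

noncomputable def W : Module.End ℤ M :=
  Finsupp.linearCombination ℤ (fun p : ℕ × ℕ × ℕ => ((-1 : ℤ) ^ p.1) • e p.1 (p.2.1 + 1) p.2.2)

noncomputable def T : Module.End ℤ M :=
  Finsupp.linearCombination ℤ
    (fun p : ℕ × ℕ × ℕ => ((-1 : ℤ) ^ (p.1 * p.2.1)) • e p.2.1 p.1 (p.2.2 + 1))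

lemma U_e (a b d : ℕ) : U (e a b d) = e (a + 1) b d := by
  simp [U, e, Finsupp.linearCombination_single]

lemma W_e (a b d : ℕ) : W (e a b d) = ((-1 : ℤ) ^ a) • e a (b + 1) d := by
  simp [W, e, Finsupp.linearCombination_single]

lemma T_e (a b d : ℕ) : T (e a b d) = ((-1 : ℤ) ^ (a * b)) • e b a (d + 1) := by
  simp [T, e, Finsupp.linearCombination_single]

lemma end_ext {f g : Module.End ℤ M} (h : ∀ a b d, f (e a b d) = g (e a b d)) : f = g := by
  refine Finsupp.lhom_ext' fun p => LinearMap.ext_ring ?_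
  exact h p.1 p.2.1 p.2.2

lemma negone (k : ℕ) : (-1 : ℤ) ^ (k + 1) = -((-1) ^ k) := by rw [pow_succ]; ring

lemma WU : W * U = -(U * W) := by
  apply end_ext; intro a b d
  simp [U_e, W_e, negone]

lemma TU : T * U = W * T := by
  apply end_ext; intro a b d
  simp only [Module.End.mul_apply, U_e, W_e, T_e, map_smul, smul_smul]
  congr 1; ring

lemma TW : T * W = U * T := by
  apply end_ext; intro a b d
  simp only [Module.End.mul_apply, U_e, W_e, T_e, map_smul, smul_smul]
  congr 1
  rw [← pow_add, show a + a * (b + 1) = a * b + 2 * a by ring, pow_add, pow_mul]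
  simp

noncomputable def gen (p : ZIdx 4) : Module.End ℤ M :=
  if p.1 = (1, 2) then U else if p.1 = (3, 4) then W else if p.1 = (1, 4) then T else 0

noncomputable def F : FreeAlgebra ℤ (ZIdx 4) →ₐ[ℤ] Module.End ℤ M := FreeAlgebra.lift ℤ gen

lemma F_rel ⦃p q : FreeAlgebra ℤ (ZIdx 4)⦄ (h : ZRel 4 p q) : F p = F q := by
  have hWU := WU
  have hTU := TU
  have hTW := TW
  cases h with
  | contain i j i' j' h1 h2 h3 h1' h2' h3' hsub =>
    rw [Set.Icc_subset_Icc_iff h2'.le] at hsub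
    obtain ⟨ha, hb⟩ := hsub
    have : i ≤ 4 := by omega
    have : i' ≤ 4 := by omega
    interval_cases i <;> interval_cases j <;> first | omega | skip
    all_goals interval_cases i' <;> interval_cases j' <;> first | omega | skip
    all_goals simp [zf, F, gen, hTU, hTW]
  | disj i j i' j' h1 h2 h3 h1' h2' h3' hd =>
    rw [Set.Icc_inter_Icc, Set.Icc_eq_empty_iff] at hd
    have : i ≤ 4 := by omega
    have : i' ≤ 4 := by omega
    interval_cases i <;> interval_cases j <;> first | omega | skip
    all_goals interval_cases i' <;> interval_cases j' <;> first | omega | (exact absurd (by decide) hd) | skip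
    all_goals simp [zf, F, gen, hWU]
  | overlap i j i' j' h1 h2 h3 h1' h2' h3' hne hnc1 hnc2 =>
    rw [Set.Icc_subset_Icc_iff h2'.le] at hnc1
    rw [Set.Icc_subset_Icc_iff h2.le] at hnc2
    rw [Set.Icc_inter_Icc, Set.nonempty_Icc] at hne
    have : i ≤ 4 := by omega
    have : i' ≤ 4 := by omega
    interval_cases i <;> interval_cases j <;> first | omega | skip
    all_goals interval_cases i' <;> interval_cases j' <;> first | omega | (exact absurd hne (by decide)) | skip
    all_goals simp [zf, F, gen]

noncomputable def φ : Zring 4 →+* Module.End ℤ M :=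
  RingQuot.lift ⟨(F : FreeAlgebra ℤ (ZIdx 4) →+* Module.End ℤ M), F_rel⟩

lemma φ_z (i j : ℕ) : φ (zElem 4 i j) = F (zf 4 i j) := by
  exact RingQuot.lift_mkRingHom_apply (F : FreeAlgebra ℤ (ZIdx 4) →+* Module.End ℤ M) F_rel _

lemma φu : φ (zElem 4 1 2) = U := by rw [φ_z]; simp [zf, F, gen]
lemma φw : φ (zElem 4 3 4) = W := by rw [φ_z]; simp [zf, F, gen]
lemma φt : φ (zElem 4 1 4) = T := by rw [φ_z]; simp [zf, F, gen]
lemma φv : φ (zElem 4 2 3) = 0 := by rw [φ_z]; simp [zf, F, gen]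
lemma φx : φ (zElem 4 1 3) = 0 := by rw [φ_z]; simp [zf, F, gen]
lemma φy : φ (zElem 4 2 4) = 0 := by rw [φ_z]; simp [zf, F, gen]

lemma zneg_mul (a b : Zring 4) : -a * b = -(a * b) := by exact neg_mul a b
lemma zmul_neg (a b : Zring 4) : a * -b = -(a * b) := by exact mul_neg a b
lemma zneg_one_pow (k : ℕ) : (-1 : Zring 4) ^ k = 1 ∨ (-1 : Zring 4) ^ k = -1 := by
  exact neg_one_pow_eq_or (Zring 4) k
lemma zcomm (a : Zring 4) (k : ℕ) : a * (-1) ^ k = (-1) ^ k * a := by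
  exact ((Commute.neg_one_right a).pow_right k).eq


lemma rel_contain (i j i' j' : ℕ) (h : 1 ≤ i ∧ i ≤ i' ∧ i' < j' ∧ j' ≤ j ∧ j ≤ 4) :
    zElem 4 i j * zElem 4 i' j' =
      ((-1 : ℤ) ^ ((j - i) * (j' - i'))) • (zElem 4 (i + j - i') (i + j - j') * zElem 4 i j) := by
  have := RingQuot.mkRingHom_rel (ZRel.contain (n := 4) i j i' j' (by omega) (by omega) (by omega)
    (by omega) (by omega) (by omega) (Set.Icc_subset_Icc (by omega) (by omega)))
  simp only [map_mul, map_zsmul] at this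
  exact this

lemma rel_overlap (i j i' j' : ℕ) (h1 : 1 ≤ i ∧ i < j ∧ j ≤ 4) (h2 : 1 ≤ i' ∧ i' < j' ∧ j' ≤ 4)
    (h3 : (i < i' ∧ i' ≤ j ∧ j < j') ∨ (i' < i ∧ i ≤ j' ∧ j' < j)) :
    zElem 4 i j * zElem 4 i' j' = 0 := by
  have := RingQuot.mkRingHom_rel (ZRel.overlap (n := 4) i j i' j' (by omega) (by omega) (by omega)
    (by omega) (by omega) (by omega)
    (by rw [Set.Icc_inter_Icc, Set.nonempty_Icc]; simp only [sup_le_iff, le_inf_iff]; omega)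
    (by rw [Set.Icc_subset_Icc_iff (by omega)]; omega)
    (by rw [Set.Icc_subset_Icc_iff (by omega)]; omega))
  simp only [map_mul, map_zero] at this
  exact this

lemma z_rev (i j : ℕ) (h : 1 ≤ j ∧ j < i ∧ i ≤ 4) :
    zElem 4 i j = ((-1 : ℤ) ^ (i - j)) • zElem 4 j i := by
  have h' : ¬ (1 ≤ i ∧ i < j ∧ j ≤ 4) := by omega
  simp only [zElem, zf, dif_neg h', dif_pos h, map_zsmul]

local notation "u" => zElem 4 1 2
local notation "v" => zElem 4 2 3
local notation "w" => zElem 4 3 4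
local notation "x" => zElem 4 1 3
local notation "y" => zElem 4 2 4
local notation "t" => zElem 4 1 4

lemma tu : t * u = w * t := by
  rw [rel_contain _ _ _ _ (by omega)]; norm_num; rw [z_rev _ _ (by omega)]; norm_num [zneg_mul]
lemma tw : t * w = u * t := by
  rw [rel_contain _ _ _ _ (by omega)]; norm_num; rw [z_rev _ _ (by omega)]; norm_num [zneg_mul]
lemma tv : t * v = v * t := by
  rw [rel_contain _ _ _ _ (by omega)]; norm_num; rw [z_rev _ _ (by omega)]; norm_num [zneg_mul]
lemma tx : t * x = y * t := by
  rw [rel_contain _ _ _ _ (by omega)]; norm_num; rw [z_rev _ _ (by omega)]; norm_num [zneg_mul]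
lemma ty : t * y = x * t := by
  rw [rel_contain _ _ _ _ (by omega)]; norm_num; rw [z_rev _ _ (by omega)]; norm_num [zneg_mul]
lemma xu : x * u = -(v * x) := by
  rw [rel_contain _ _ _ _ (by omega)]; norm_num; rw [z_rev _ _ (by omega)]; norm_num [zneg_mul]
lemma yv : y * v = -(w * y) := by
  rw [rel_contain _ _ _ _ (by omega)]; norm_num; rw [z_rev _ _ (by omega)]; norm_num [zneg_mul]
lemma wu : w * u = -(u * w) := by
  have := RingQuot.mkRingHom_rel (ZRel.disj (n := 4) 3 4 1 2 (by omega) (by omega) (by omega)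
    (by omega) (by omega) (by omega)
    (by rw [Set.Icc_inter_Icc, Set.Icc_eq_empty_iff]; decide))
  simp only [map_mul, map_zsmul] at this
  simpa [zElem] using this
lemma vu : v * u = 0 := rel_overlap _ _ _ _ (by omega) (by omega) (by omega)
lemma wv : w * v = 0 := rel_overlap _ _ _ _ (by omega) (by omega) (by omega)
lemma xw : x * w = 0 := rel_overlap _ _ _ _ (by omega) (by omega) (by omega)
lemma wx : w * x = 0 := rel_overlap _ _ _ _ (by omega) (by omega) (by omega)
lemma yu : y * u = 0 := rel_overlap _ _ _ _ (by omega) (by omega) (by omega)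
lemma uy : u * y = 0 := rel_overlap _ _ _ _ (by omega) (by omega) (by omega)

noncomputable def m (a b d : ℕ) : Zring 4 := u ^ (a + 1) * w ^ (b + 1) * t ^ d

noncomputable def mm (p : ℕ × ℕ × ℕ) : Zring 4 := m p.1 p.2.1 p.2.2

noncomputable def S : Submodule ℤ (Zring 4) := Submodule.span ℤ (Set.range mm)

lemma m_mem (a b d : ℕ) : m a b d ∈ S := Submodule.subset_span ⟨(a, b, d), rfl⟩

lemma sgn_mem (k : ℕ) {s : Zring 4} (h : s ∈ S) : (-1) ^ k * s ∈ S := by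
  rcases zneg_one_pow k with h' | h' <;> rw [h']
  · simpa using h
  · rw [zneg_mul, one_mul]; exact S.neg_mem h

lemma wpu (b : ℕ) : w ^ b * u = (-1) ^ b * (u * w ^ b) := by
  induction b with
  | zero => simp
  | succ k ih =>
    rw [pow_succ, mul_assoc, wu, zmul_neg, ← mul_assoc, ih, pow_succ (-1 : Zring 4)]
    simp only [mul_assoc, zneg_mul, one_mul, zmul_neg]

lemma wup (a : ℕ) : w * u ^ a = (-1) ^ a * (u ^ a * w) := by
  induction a with
  | zero => simp
  | succ k ih =>
    rw [pow_succ, ← mul_assoc, ih, pow_succ (-1 : Zring 4)]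
    simp only [mul_assoc, zneg_mul, one_mul, zmul_neg, wu]

lemma wpup (a b : ℕ) : ∃ k : ℕ, w ^ b * u ^ a = (-1) ^ k * (u ^ a * w ^ b) := by
  induction b with
  | zero => exact ⟨0, by simp⟩
  | succ b ih =>
    obtain ⟨k, hk⟩ := ih
    refine ⟨a + k, ?_⟩
    have hc : w ^ b * (-1) ^ a = (-1) ^ a * w ^ b :=
      zcomm _ _
    rw [pow_succ, mul_assoc, wup, ← mul_assoc, hc, mul_assoc, ← mul_assoc (w ^ b), hk, pow_add]
    simp only [mul_assoc]

lemma tup (a : ℕ) : t * u ^ a = w ^ a * t :=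
  (SemiconjBy.pow_right (show SemiconjBy t u w from tu) a).eq
lemma twp (a : ℕ) : t * w ^ a = u ^ a * t :=
  (SemiconjBy.pow_right (show SemiconjBy t w u from tw) a).eq

lemma xuw (a : ℕ) : x * u ^ a * w = 0 := by
  induction a with
  | zero => simp [xw]
  | succ k ih =>
    rw [pow_succ', ← mul_assoc, xu]
    simp only [mul_assoc, zneg_mul] at ih ⊢
    rw [ih]; simp

lemma uwy (b : ℕ) : u * w ^ b * y = 0 := by
  induction b with
  | zero => simp [uy]
  | succ k ih =>
    have h : w * y = -(y * v) := by rw [yv, neg_neg]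
    rw [pow_succ]
    simp only [mul_assoc] at ih ⊢
    rw [h]
    simp only [zmul_neg, ← mul_assoc] at ih ⊢
    rw [ih]; simp

inductive IsGen : Zring 4 → Prop
  | gu : IsGen u
  | gv : IsGen v
  | gw : IsGen w
  | gx : IsGen x
  | gy : IsGen y
  | gt : IsGen t

lemma t_pow_gen (d : ℕ) {g : Zring 4} (hg : IsGen g) : ∃ g', IsGen g' ∧ t ^ d * g = g' * t ^ d := by
  induction d with
  | zero => exact ⟨g, hg, by simp⟩
  | succ d ih =>
    obtain ⟨g', h', h⟩ := ih
    have : ∃ g'', IsGen g'' ∧ t * g' = g'' * t := by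
      cases h' with
      | gu => exact ⟨_, .gw, tu⟩
      | gv => exact ⟨_, .gv, tv⟩
      | gw => exact ⟨_, .gu, tw⟩
      | gx => exact ⟨_, .gy, tx⟩
      | gy => exact ⟨_, .gx, ty⟩
      | gt => exact ⟨_, .gt, rfl⟩
    obtain ⟨g'', h'', h2⟩ := this
    refine ⟨g'', h'', ?_⟩
    rw [pow_succ', mul_assoc, h, ← mul_assoc, h2, mul_assoc]

lemma gen_mul_m {g : Zring 4} (hg : IsGen g) (a b d : ℕ) : g * m a b d ∈ S := by
  cases hg with
  | gu =>
    have : u * m a b d = m (a + 1) b d := by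
      simp only [m, pow_succ' _ (a + 1), mul_assoc]
    rw [this]; exact m_mem _ _ _
  | gv =>
    have : v * m a b d = 0 := by
      simp only [m, pow_succ' _ a, ← mul_assoc, vu, zero_mul]
    rw [this]; exact S.zero_mem
  | gw =>
    have : w * m a b d = (-1) ^ (a + 1) * m a (b + 1) d := by
      simp only [m, ← mul_assoc, wup]
      simp only [mul_assoc, pow_succ' _ (b + 1)]
    rw [this]; exact sgn_mem _ (m_mem _ _ _)
  | gx =>
    have : x * m a b d = 0 := by
      simp only [m, pow_succ' _ b, ← mul_assoc, xuw, zero_mul]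
    rw [this]; exact S.zero_mem
  | gy =>
    have : y * m a b d = 0 := by
      simp only [m, pow_succ' _ a, ← mul_assoc, yu, zero_mul]
    rw [this]; exact S.zero_mem
  | gt =>
    obtain ⟨k, hk⟩ := wpup (b + 1) (a + 1)
    have : t * m a b d = (-1) ^ k * m b a (d + 1) := by
      simp only [m]
      rw [← mul_assoc, ← mul_assoc, tup, mul_assoc (w ^ (a + 1)), twp, ← mul_assoc, hk,
        pow_succ' _ d]
      simp only [mul_assoc]
    rw [this]; exact sgn_mem _ (m_mem _ _ _)

lemma m_mul_gen {g : Zring 4} (hg : IsGen g) (a b d : ℕ) : m a b d * g ∈ S := by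
  obtain ⟨g', hg', h⟩ := t_pow_gen d hg
  have h0 : m a b d * g = u ^ (a + 1) * w ^ (b + 1) * g' * t ^ d := by
    rw [m, mul_assoc, h]; simp only [mul_assoc]
  rw [h0]
  cases hg' with
  | gu =>
    have hc : u ^ (a + 1) * (-1) ^ (b + 1) = (-1) ^ (b + 1) * u ^ (a + 1) :=
      zcomm _ _
    have : u ^ (a + 1) * w ^ (b + 1) * u * t ^ d = (-1) ^ (b + 1) * m (a + 1) b d := by
      rw [mul_assoc (u ^ (a + 1)), wpu, ← mul_assoc (u ^ (a + 1)), hc, m, pow_succ _ (a + 1)]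
      simp only [mul_assoc]
    rw [this]; exact sgn_mem _ (m_mem _ _ _)
  | gv =>
    have : u ^ (a + 1) * w ^ (b + 1) * v * t ^ d = 0 := by
      rw [pow_succ w b, mul_assoc (u ^ (a + 1)), mul_assoc (w ^ b), wv]; simp
    rw [this]; exact S.zero_mem
  | gw =>
    have : u ^ (a + 1) * w ^ (b + 1) * w * t ^ d = m a (b + 1) d := by
      rw [m, pow_succ w (b + 1)]; simp only [mul_assoc]
    rw [this]; exact m_mem _ _ _
  | gx =>
    have : u ^ (a + 1) * w ^ (b + 1) * x * t ^ d = 0 := by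
      rw [pow_succ w b, mul_assoc (u ^ (a + 1)), mul_assoc (w ^ b), wx]; simp
    rw [this]; exact S.zero_mem
  | gy =>
    have : u ^ (a + 1) * w ^ (b + 1) * y * t ^ d = 0 := by
      rw [pow_succ u a, mul_assoc (u ^ a), mul_assoc (u ^ a), uwy]; simp
    rw [this]; exact S.zero_mem
  | gt =>
    have : u ^ (a + 1) * w ^ (b + 1) * t * t ^ d = m a b (d + 1) := by
      rw [m, pow_succ' t d]; simp only [mul_assoc]
    rw [this]; exact m_mem _ _ _

lemma gen_mul {g : Zring 4} (hg : IsGen g) {s : Zring 4} (hs : s ∈ S) : g * s ∈ S := by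
  have : S ≤ S.comap (AddMonoidHom.mulLeft g).toIntLinearMap := by
    refine Submodule.span_le.2 ?_
    rintro _ ⟨p, rfl⟩
    exact gen_mul_m hg _ _ _
  exact this hs

lemma mul_gen {g : Zring 4} (hg : IsGen g) {s : Zring 4} (hs : s ∈ S) : s * g ∈ S := by
  have : S ≤ S.comap (AddMonoidHom.mulRight g).toIntLinearMap := by
    refine Submodule.span_le.2 ?_
    rintro _ ⟨p, rfl⟩
    exact m_mul_gen hg _ _ _
  exact this hs

lemma isGen_ι (p : ZIdx 4) : IsGen (RingQuot.mkRingHom (ZRel 4) (FreeAlgebra.ι ℤ p)) := by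
  obtain ⟨⟨i, j⟩, h⟩ := p
  have h0 : RingQuot.mkRingHom (ZRel 4) (FreeAlgebra.ι ℤ ⟨(i, j), h⟩) = zElem 4 i j := by
    have h' : 1 ≤ i ∧ i < j ∧ j ≤ 4 := h
    simp only [zElem, zf, dif_pos h']
  rw [h0]
  obtain ⟨h1, h2, h3⟩ := h
  simp only at h1 h2 h3
  have : i ≤ 4 := by omega
  interval_cases i <;> interval_cases j <;> first | omega | constructor

lemma mul_closed (r : Zring 4) : ∀ s ∈ S, r * s ∈ S ∧ s * r ∈ S := by
  obtain ⟨r, rfl⟩ := RingQuot.mkRingHom_surjective (ZRel 4) r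
  induction r using FreeAlgebra.induction with
  | grade0 k =>
    intro s hs
    have : RingQuot.mkRingHom (ZRel 4) (algebraMap ℤ _ k) = (k : Zring 4) := by simp
    rw [this]
    constructor
    · rw [← zsmul_eq_mul]; exact S.smul_mem _ hs
    · rw [← Int.cast_comm, ← zsmul_eq_mul]; exact S.smul_mem _ hs
  | grade1 p => exact fun s hs => ⟨gen_mul (isGen_ι p) hs, mul_gen (isGen_ι p) hs⟩
  | mul a b ha hb =>
    intro s hs
    rw [map_mul]
    constructor
    · rw [mul_assoc]; exact (ha _ (hb _ hs).1).1
    · rw [← mul_assoc]; exact (hb _ (ha _ hs).2).2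
  | add a b ha hb =>
    intro s hs
    rw [map_add, add_mul, mul_add]
    exact ⟨S.add_mem (ha _ hs).1 (hb _ hs).1, S.add_mem (ha _ hs).2 (hb _ hs).2⟩

noncomputable def J : TwoSidedIdeal (Zring 4) :=
  TwoSidedIdeal.mk' (S : Set (Zring 4)) S.zero_mem (fun h h' => S.add_mem h h')
    (fun h => S.neg_mem h) (fun {r s} h => (mul_closed r s h).1) (fun {s r} h => (mul_closed r s h).2)

lemma I1_le {a : Zring 4} (h : a ∈ TwoSidedIdeal.span {u * w}) : a ∈ S := by
  have h1 : TwoSidedIdeal.span {u * w} ≤ J := by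
    rw [TwoSidedIdeal.span_le]
    rintro _ rfl
    have : m 0 0 0 ∈ S := m_mem 0 0 0
    simpa [J, TwoSidedIdeal.mem_mk', m] using this
  have := h1 h
  simpa [J, TwoSidedIdeal.mem_mk'] using this

lemma I2_le {a : Zring 4} (h : a ∈ TwoSidedIdeal.span {v, x, y}) : φ a = 0 := by
  have h1 : TwoSidedIdeal.span {v, x, y} ≤ TwoSidedIdeal.ker φ := by
    rw [TwoSidedIdeal.span_le]
    rintro _ (rfl | rfl | rfl)
    · exact (TwoSidedIdeal.mem_ker _).2 φv
    · exact (TwoSidedIdeal.mem_ker _).2 φx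
    · exact (TwoSidedIdeal.mem_ker _).2 φy
  exact (TwoSidedIdeal.mem_ker _).1 (h1 h)

lemma T_pow (d : ℕ) : (T ^ d) (e 0 0 0) = e 0 0 d := by
  induction d with
  | zero => rfl
  | succ d ih => rw [pow_succ', Module.End.mul_apply, ih, T_e]; simp

lemma W_pow (b d : ℕ) : (W ^ b) (e 0 0 d) = e 0 b d := by
  induction b with
  | zero => rfl
  | succ b ih => rw [pow_succ', Module.End.mul_apply, ih, W_e]; simp

lemma U_pow (a b d : ℕ) : (U ^ a) (e 0 b d) = e a b d := by
  induction a with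
  | zero => rfl
  | succ a ih => rw [pow_succ', Module.End.mul_apply, ih, U_e]

lemma φ_m (a b d : ℕ) : φ (m a b d) (e 0 0 0) = e (a + 1) (b + 1) d := by
  simp only [m, map_mul, map_pow, φu, φw, φt, Module.End.mul_apply, T_pow, W_pow, U_pow]

lemma final {a : Zring 4} (h : a ∈ S) (h0 : φ a = 0) : a = 0 := by
  obtain ⟨f, rfl⟩ := (Finsupp.mem_span_range_iff_exists_finsupp).1 h
  have key : f.mapDomain (fun p : ℕ × ℕ × ℕ => (p.1 + 1, p.2.1 + 1, p.2.2)) = 0 := by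
    have h1 := congrArg (fun g : Module.End ℤ M => g (e 0 0 0)) h0
    simp only [Finsupp.sum, map_sum, map_zsmul, LinearMap.sum_apply, LinearMap.smul_apply, mm, φ_m,
      LinearMap.zero_apply] at h1
    rw [← h1, Finsupp.mapDomain, Finsupp.sum]
    refine Finset.sum_congr rfl fun p _ => ?_
    simp [e]
  have hinj : Function.Injective (fun p : ℕ × ℕ × ℕ => (p.1 + 1, p.2.1 + 1, p.2.2)) := by
    rintro ⟨a, b, c⟩ ⟨a', b', c'⟩ h
    simpa using h
  have hf : f = 0 := Finsupp.mapDomain_injective hinj (by rw [key, Finsupp.mapDomain_zero])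
  rw [hf]; simp

end ZFour

/-- In `Z(4)`, with `u = z_{1,2}`, `v = z_{2,3}`, `w = z_{3,4}`,
`x = z_{1,3}`, `y = z_{2,4}`, the two-sided ideal `I₁` generated by `u*w` and the two-sided
ideal `I₂` generated by `{v, x, y}` intersect in `{0}`. -/
theorem Zring_four_minimal_primes_intersection :
    ∀ a : Zring 4,
      a ∈ TwoSidedIdeal.span {zElem 4 1 2 * zElem 4 3 4} →
      a ∈ TwoSidedIdeal.span {zElem 4 2 3, zElem 4 1 3, zElem 4 2 4} →
      a = 0 := by
  intro a h1 h2
  exact ZFour.final (ZFour.I1_le h1) (ZFour.I2_le h2)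
end

section
/- Let J be the two-sided ideal of N(n) generated by the elements Y_1, …, Y_{n−1}. Then J^{n(n−1)/2 + 1} = 0, and for every integer m ≥ 0 the quotient ring N(n)/J^m is a free ℤ-module. -/
/-- Index type for the generators `Y_1, …, Y_{n-1}` of the nilCoxeter algebra `N(n)`. -/
abbrev NIdx (n : ℕ) := {i : ℕ // 1 ≤ i ∧ i + 1 ≤ n}

/-- The generator `Y_i` in the free algebra (junk value `0` outside `1 ≤ i ≤ n-1`). -/
noncomputable def Yf (n : ℕ) (i : ℕ) : FreeAlgebra ℤ (NIdx n) :=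
  if h : 1 ≤ i ∧ i + 1 ≤ n then FreeAlgebra.ι ℤ ⟨i, h⟩ else 0

/-- The defining relations of the nilCoxeter algebra `N(n)` of the symmetric group `S_n`:
`Y_i² = 0`, the braid relations `Y_i Y_{i+1} Y_i = Y_{i+1} Y_i Y_{i+1}`, and the
commutation relations `Y_i Y_j = Y_j Y_i` for `|i - j| ≥ 2`. -/
inductive NRel (n : ℕ) : FreeAlgebra ℤ (NIdx n) → FreeAlgebra ℤ (NIdx n) → Prop
  | sq (i : NIdx n) : NRel n (FreeAlgebra.ι ℤ i * FreeAlgebra.ι ℤ i) 0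
  | braid (i j : NIdx n) (h : j.1 = i.1 + 1) :
      NRel n (FreeAlgebra.ι ℤ i * FreeAlgebra.ι ℤ j * FreeAlgebra.ι ℤ i)
        (FreeAlgebra.ι ℤ j * FreeAlgebra.ι ℤ i * FreeAlgebra.ι ℤ j)
  | comm (i j : NIdx n) (h : i.1 + 2 ≤ j.1 ∨ j.1 + 2 ≤ i.1) :
      NRel n (FreeAlgebra.ι ℤ i * FreeAlgebra.ι ℤ j)
        (FreeAlgebra.ι ℤ j * FreeAlgebra.ι ℤ i)

/-- The nilCoxeter algebra `N(n)` of the symmetric group `S_n` over `ℤ`. -/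
abbrev Nring (n : ℕ) := RingQuot (NRel n)

/-- The image of the generator `Y_i` in `N(n)`. -/
noncomputable def Ygen (n : ℕ) (i : ℕ) : Nring n :=
  RingQuot.mkRingHom (NRel n) (Yf n i)

/-- `Y_{[i,j]} = Y_{j-1} Y_{j-2} ⋯ Y_{i+1} Y_i`, with `Y_{[i,i]} = 1`. -/
noncomputable def Yint (n : ℕ) (i j : ℕ) : Nring n :=
  (((List.range' i (j - i)).reverse).map (Ygen n)).prod

/-- `Y_{[i,j];k} = Y_{[i,j+1-k]} Y_{[i+1,j+2-k]} ⋯ Y_{[i+k-1,j]}`, with `Y_{[i,j];0} = 1`. -/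
noncomputable def Yintk (n : ℕ) (i j k : ℕ) : Nring n :=
  ((List.range k).map fun t => Yint n (i + t) (j + 1 - k + t)).prod

/-- The two-sided ideal `J` of `N(n)` generated by `Y_1, …, Y_{n-1}`, regarded as a
ℤ-submodule (it is spanned by the elements `x · Y_i · y`). -/
noncomputable def Jaug (n : ℕ) : Submodule ℤ (Nring n) :=
  Submodule.span ℤ {a | ∃ (x y : Nring n) (i : ℕ), 1 ≤ i ∧ i + 1 ≤ n ∧ a = x * Ygen n i * y}


namespace NilCox

/-- The word `a+k-1, …, a+1, a`. -/
def dw (a : ℕ) : ℕ → List ℕ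
  | 0 => []
  | k + 1 => (a + k) :: dw a k

/-- Normal form words in letters `1, …, m`. -/
def NF : ℕ → Set (List ℕ)
  | 0 => {[]}
  | m + 1 => {l | ∃ w ∈ NF m, ∃ a k : ℕ, 1 ≤ a ∧ a + k = m + 2 ∧ l = w ++ dw a k}

theorem dw_length (a k : ℕ) : (dw a k).length = k := by
  induction k with
  | zero => rfl
  | succ k ih => simp [dw, ih]

theorem NF_length (m : ℕ) : ∀ w ∈ NF m, 2 * w.length ≤ (m + 1) * m := by
  induction m with
  | zero => intro w hw; simp [NF] at hw; simp [hw]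
  | succ m ih =>
    rintro l ⟨w, hw, a, k, ha, hk, rfl⟩
    have := ih w hw
    rw [List.length_append, dw_length]
    have : k ≤ m + 1 := by omega
    nlinarith

theorem NF_nil (m : ℕ) : [] ∈ NF m := by
  induction m with
  | zero => simp [NF]
  | succ m ih => exact ⟨[], ih, m + 2, 0, by omega, by omega, by simp [dw]⟩

section Span

variable {R : Type*} [Ring R] (Y : ℕ → R)

/-- The product of a word. -/
def P (l : List ℕ) : R := (l.map Y).prod

theorem P_append (l l' : List ℕ) : P Y (l ++ l') = P Y l * P Y l' := by simp [P]

theorem P_cons (i : ℕ) (l' : List ℕ) : P Y (i :: l') = Y i * P Y l' := by simp [P]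

theorem P_nil : P Y [] = 1 := by simp [P]

theorem D_comm_low
    (hco : ∀ i j, i + 2 ≤ j → Y i * Y j = Y j * Y i)
    (a k i : ℕ) (h : i + 2 ≤ a) : P Y (dw a k) * Y i = Y i * P Y (dw a k) := by
  induction k with
  | zero => simp [dw, P]
  | succ k ih =>
    rw [dw, P_cons, mul_assoc, ih, ← mul_assoc, ← mul_assoc, hco i (a + k) (by omega)]

theorem D_comm_high
    (hco : ∀ i j, i + 2 ≤ j → Y i * Y j = Y j * Y i)
    (a k i : ℕ) (h : a + k + 1 ≤ i) :
    P Y (dw a k) * Y i = Y i * P Y (dw a k) := by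
  induction k with
  | zero => simp [dw, P]
  | succ k ih =>
    rw [dw, P_cons, mul_assoc, ih (by omega), ← mul_assoc, ← mul_assoc,
      hco (a + k) i (by omega)]

theorem dw_snoc (a k : ℕ) : dw a (k + 1) = dw (a + 1) k ++ [a] := by
  induction k with
  | zero => simp [dw]
  | succ k ih =>
    rw [dw, ih, dw]
    simp only [List.cons_append, List.cons.injEq, and_true]
    omega

theorem D_zero
    (hsq : ∀ i, Y i * Y i = 0)
    (a k : ℕ) : P Y (dw a (k + 1)) * Y a = 0 := by
  rw [dw_snoc, P_append, P_cons, P_nil, mul_one, mul_assoc, hsq, mul_zero]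

theorem D_shift
    (hbr : ∀ i, Y i * Y (i + 1) * Y i = Y (i + 1) * Y i * Y (i + 1))
    (hco : ∀ i j, i + 2 ≤ j → Y i * Y j = Y j * Y i)
    (a k i : ℕ) (h : a ≤ i) (h2 : i + 1 < a + k) :
    P Y (dw a k) * Y (i + 1) = Y i * P Y (dw a k) := by
  induction k with
  | zero => omega
  | succ k ih =>
    by_cases hk : i + 1 < a + k
    · rw [dw, P_cons, mul_assoc, ih hk, ← mul_assoc, ← mul_assoc, hco i (a + k) (by omega)]
    · obtain ⟨k, rfl⟩ : ∃ t, k = t + 1 := ⟨k - 1, by omega⟩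
      obtain rfl : i = a + k := by omega
      rw [dw, dw, P_cons, P_cons]
      have := D_comm_high Y hco a k (a + k + 1) le_rfl
      calc Y (a + (k + 1)) * (Y (a + k) * P Y (dw a k)) * Y (a + k + 1)
          = Y (a + k + 1) * Y (a + k) * (P Y (dw a k) * Y (a + k + 1)) := by
            simp only [mul_assoc, add_assoc]
        _ = (Y (a + k + 1) * Y (a + k) * Y (a + k + 1)) * P Y (dw a k) := by
            rw [this]; simp only [mul_assoc]
        _ = _ := by rw [← hbr]; simp only [mul_assoc, add_assoc]

theorem NF_mul
    (hsq : ∀ i, Y i * Y i = 0)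
    (hbr : ∀ i, Y i * Y (i + 1) * Y i = Y (i + 1) * Y i * Y (i + 1))
    (hco : ∀ i j, i + 2 ≤ j → Y i * Y j = Y j * Y i)
    (m : ℕ) : ∀ w ∈ NF m, ∀ i, 1 ≤ i → i ≤ m →
    P Y w * Y i = 0 ∨ ∃ w' ∈ NF m, P Y w' = P Y w * Y i ∧ w'.length = w.length + 1 := by
  induction m with
  | zero => intro w hw i h1 h2; omega
  | succ m ih =>
    rintro l ⟨w, hw, a, k, ha, hk, rfl⟩ i h1 h2
    rw [P_append, mul_assoc]
    have key : ∀ j, 1 ≤ j → j ≤ m → P Y (dw a k) * Y i = Y j * P Y (dw a k) →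
        P Y w * (P Y (dw a k) * Y i) = 0 ∨ ∃ w' ∈ NF (m + 1),
          P Y w' = P Y w * (P Y (dw a k) * Y i) ∧ w'.length = (w ++ dw a k).length + 1 := by
      intro j hj1 hj2 hj
      rw [hj, ← mul_assoc]
      rcases ih w hw j hj1 hj2 with h | ⟨w', hw', he, hl⟩
      · left; rw [h, zero_mul]
      · right
        refine ⟨w' ++ dw a k, ⟨w', hw', a, k, ha, hk, rfl⟩, ?_, ?_⟩
        · rw [P_append, he]
        · simp only [List.length_append, hl]; omega
    rcases lt_trichotomy i a with h | h | h
    · by_cases h' : i + 1 = a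
      · subst h'
        right
        refine ⟨w ++ dw i (k + 1), ⟨w, hw, i, k + 1, h1, by omega, rfl⟩, ?_, ?_⟩
        · rw [P_append, dw_snoc, P_append, P_cons, P_nil, mul_one]
        · simp only [List.length_append, dw_length]; omega
      · exact key i h1 (by omega) (D_comm_low Y hco a k i (by omega))
    · subst h
      obtain ⟨k, rfl⟩ : ∃ t, k = t + 1 := ⟨k - 1, by omega⟩
      left
      rw [D_zero Y hsq, mul_zero]
    · obtain ⟨j, rfl⟩ : ∃ j, i = j + 1 := ⟨i - 1, by omega⟩
      exact key j (by omega) (by omega) (D_shift Y hbr hco a k j (by omega) (by omega))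

theorem word_NF
    (hsq : ∀ i, Y i * Y i = 0)
    (hbr : ∀ i, Y i * Y (i + 1) * Y i = Y (i + 1) * Y i * Y (i + 1))
    (hco : ∀ i j, i + 2 ≤ j → Y i * Y j = Y j * Y i)
    (m : ℕ) (hz : ∀ i, ¬ (1 ≤ i ∧ i ≤ m) → Y i = 0) (l : List ℕ) :
    P Y l = 0 ∨ ∃ w ∈ NF m, P Y w = P Y l ∧ w.length = l.length := by
  induction l using List.reverseRecOn with
  | nil => exact Or.inr ⟨[], NF_nil m, rfl, rfl⟩
  | append_singleton l i ih =>
    rw [P_append, P_cons, P_nil, mul_one]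
    rcases ih with h | ⟨w, hw, he, hl⟩
    · left; rw [h, zero_mul]
    · by_cases hi : 1 ≤ i ∧ i ≤ m
      · rcases NF_mul Y hsq hbr hco m w hw i hi.1 hi.2 with h | ⟨w', hw', he', hl'⟩
        · left; rw [← he, h]
        · right; exact ⟨w', hw', by rw [he', he], by simp [hl', hl]⟩
      · left; rw [hz i hi, mul_zero]

end Span

/-- precomposition with the adjacent transposition -/
def sw (i : ℕ) (f : ℕ → ℕ) : ℕ → ℕ := fun x => f (Equiv.swap i (i + 1) x)

theorem sw_eq (i : ℕ) (f : ℕ → ℕ) (x : ℕ) :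
    sw i f x = if x = i then f (i + 1) else if x = i + 1 then f i else f x := by
  rw [sw, Equiv.swap_apply_def]; split_ifs <;> rfl

theorem sw_sw (i : ℕ) (f : ℕ → ℕ) : sw i (sw i f) = f := by
  funext x; simp [sw]

/-- action of a word on a sequence -/
def act : List ℕ → (ℕ → ℕ) → ℕ → ℕ
  | [], f => f
  | i :: l, f => act l (sw i f)

/-- every step of the action is an ascent -/
def asc : List ℕ → (ℕ → ℕ) → Prop
  | [], _ => True
  | i :: l, f => f i < f (i + 1) ∧ asc l (sw i f)

theorem act_append (l l' : List ℕ) (f : ℕ → ℕ) : act (l ++ l') f = act l' (act l f) := by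
  induction l generalizing f with
  | nil => rfl
  | cons i l ih => simp [act, ih]

theorem asc_append (l l' : List ℕ) (f : ℕ → ℕ) :
    asc (l ++ l') f ↔ asc l f ∧ asc l' (act l f) := by
  induction l generalizing f with
  | nil => simp [asc, act]
  | cons i l ih => simp [act, asc, ih, and_assoc]

theorem sw_inj (i : ℕ) (f : ℕ → ℕ) (h : Function.Injective f) : Function.Injective (sw i f) :=
  h.comp (Equiv.swap i (i + 1)).injective

theorem act_injective (l : List ℕ) (f : ℕ → ℕ) (h : Function.Injective f) :
    Function.Injective (act l f) := by
  induction l generalizing f with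
  | nil => exact h
  | cons i l ih => exact ih _ (sw_inj i f h)

theorem act_cancel (l : List ℕ) (f g : ℕ → ℕ) (h : act l f = act l g) : f = g := by
  induction l generalizing f g with
  | nil => exact h
  | cons i l ih =>
    have := congrArg (sw i) (ih _ _ h)
    rwa [sw_sw, sw_sw] at this

theorem dw_act (a k : ℕ) (f : ℕ → ℕ) (h : ∀ i < a + k, f i < f (a + k)) :
    asc (dw a k) f ∧ act (dw a k) f a = f (a + k) ∧ ∀ i, a + k < i → act (dw a k) f i = f i := by
  induction k generalizing f with
  | zero => simp [dw, asc, act]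
  | succ k ih =>
    have h1 : sw (a + k) f (a + k) = f (a + (k + 1)) := by
      rw [sw_eq, if_pos rfl]; rfl
    obtain ⟨i1, i2, i3⟩ := ih (sw (a + k) f) (by
      intro i hi
      rw [h1, sw_eq, if_neg (by omega), if_neg (by omega)]
      exact h i (by omega))
    refine ⟨⟨h _ (by omega), i1⟩, ?_, ?_⟩
    · rw [dw, act, i2, h1]
    · intro i hi
      rw [dw, act, i3 i (by omega), sw_eq, if_neg (by omega), if_neg (by omega)]

theorem NF_good (m : ℕ) : ∀ w ∈ NF m, asc w id ∧ ∀ i, m + 2 ≤ i → act w id i = i := by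
  induction m with
  | zero => intro w hw; simp [NF] at hw; simp [hw, asc, act]
  | succ m ih =>
    rintro l ⟨w, hw, a, k, ha, hk, rfl⟩
    obtain ⟨h1, h2⟩ := ih w hw
    have hinj := act_injective w id Function.injective_id
    have := dw_act a k (act w id) (by
      intro i hi
      rw [h2 (a + k) (by omega)]
      by_contra hc
      have e := h2 (act w id i) (by omega)
      have := hinj e
      omega)
    refine ⟨(asc_append _ _ _).2 ⟨h1, this.1⟩, ?_⟩
    intro i hi
    rw [act_append, this.2.2 i (by omega), h2 i (by omega)]

theorem NF_inj (m : ℕ) : ∀ w ∈ NF m, ∀ w' ∈ NF m, act w id = act w' id → w = w' := by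
  induction m with
  | zero => intro w hw w' hw' _; simp [NF] at hw hw'; simp [hw, hw']
  | succ m ih =>
    have aux : ∀ w ∈ NF m, ∀ a k : ℕ, a + k = m + 2 → act (w ++ dw a k) id a = m + 2 := by
      intro w hw a k hk
      obtain ⟨h1, h2⟩ := NF_good m w hw
      have hinj := act_injective w id Function.injective_id
      have := dw_act a k (act w id) (by
        intro i hi
        rw [h2 (a + k) (by omega)]
        by_contra hc
        have e := h2 (act w id i) (by omega)
        have := hinj e
        omega)
      rw [act_append, this.2.1, h2 _ (by omega), hk]
    rintro l ⟨w, hw, a, k, ha, hk, rfl⟩ l' ⟨w', hw', a', k', ha', hk', rfl⟩ he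
    have e1 := aux w hw a k hk
    have e2 := aux w' hw' a' k' hk'
    rw [← he] at e2
    have : a = a' := act_injective _ id Function.injective_id (e1.trans e2.symm)
    subst this
    obtain rfl : k = k' := by omega
    rw [act_append, act_append] at he
    rw [ih w hw w' hw' (act_cancel _ _ _ he)]

/-- the module of the representation -/
abbrev M := (ℕ → ℕ) →₀ ℤ

/-- the operator of a generator -/
noncomputable def T (i : ℕ) : Module.End ℤ M :=
  Finsupp.linearCombination ℤ
    (fun f : ℕ → ℕ => if f i < f (i + 1) then Finsupp.single (sw i f) (1 : ℤ) else 0)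

theorem T_single (i : ℕ) (f : ℕ → ℕ) : T i (Finsupp.single f 1) =
    if f i < f (i + 1) then Finsupp.single (sw i f) (1 : ℤ) else 0 := by
  simp [T]

theorem T_sq (i : ℕ) : T i * T i = 0 := by
  refine Finsupp.lhom_ext' fun f => LinearMap.ext_ring ?_
  simp only [LinearMap.comp_apply, Finsupp.lsingle_apply, Module.End.mul_apply, T_single]
  split_ifs with h
  · rw [T_single, if_neg]
    · rfl
    · simp [sw_eq]; omega
  · simp

theorem sw_comm (i j : ℕ) (h : i + 2 ≤ j) (f : ℕ → ℕ) : sw i (sw j f) = sw j (sw i f) := by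
  funext x
  simp only [sw_eq]
  split_ifs <;> first | rfl | omega

theorem sw_braid (i : ℕ) (f : ℕ → ℕ) :
    sw i (sw (i + 1) (sw i f)) = sw (i + 1) (sw i (sw (i + 1) f)) := by
  funext x
  simp only [sw_eq]
  split_ifs <;> first | rfl | omega

theorem T_comm (i j : ℕ) (h : i + 2 ≤ j) : T i * T j = T j * T i := by
  refine Finsupp.lhom_ext' fun f => LinearMap.ext_ring ?_
  simp only [LinearMap.comp_apply, Finsupp.lsingle_apply, Module.End.mul_apply, T_single]
  have e1 : sw j f i = f i := by rw [sw_eq, if_neg (by omega), if_neg (by omega)]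
  have e2 : sw j f (i + 1) = f (i + 1) := by rw [sw_eq, if_neg (by omega), if_neg (by omega)]
  have e3 : sw i f j = f j := by rw [sw_eq, if_neg (by omega), if_neg (by omega)]
  have e4 : sw i f (j + 1) = f (j + 1) := by rw [sw_eq, if_neg (by omega), if_neg (by omega)]
  split_ifs with h1 h2 h2 <;> simp only [T_single, e1, e2, e3, e4, map_zero, h1, h2, if_true,
    if_false, sw_comm i j h]

theorem T_braid (i : ℕ) : T i * T (i + 1) * T i = T (i + 1) * T i * T (i + 1) := by
  refine Finsupp.lhom_ext' fun f => LinearMap.ext_ring ?_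
  simp only [LinearMap.comp_apply, Finsupp.lsingle_apply, Module.End.mul_apply, T_single]
  have e1 : sw i f (i + 1) = f i := by simp [sw_eq]
  have e2 : sw i f (i + 1 + 1) = f (i + 1 + 1) := by simp [sw_eq]; omega
  have e3 : sw (i + 1) f i = f i := by simp [sw_eq]; omega
  have e4 : sw (i + 1) f (i + 1) = f (i + 1 + 1) := by simp [sw_eq]
  have e5 : sw (i + 1) (sw i f) i = f (i + 1) := by simp [sw_eq]; omega
  have e6 : sw (i + 1) (sw i f) (i + 1) = f (i + 1 + 1) := by simp [sw_eq]; omega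
  have e7 : sw i (sw (i + 1) f) (i + 1) = f i := by simp [sw_eq]; omega
  have e8 : sw i (sw (i + 1) f) (i + 1 + 1) = f (i + 1) := by simp [sw_eq]; omega
  by_cases h1 : f i < f (i + 1) <;> by_cases h2 : f (i + 1) < f (i + 1 + 1) <;>
    by_cases h3 : f i < f (i + 1 + 1) <;> first
    | (exfalso; omega)
    | simp only [T_single, e1, e2, e3, e4, e5, e6, e7, e8, map_zero, h1, h2, h3, if_true,
        if_false, sw_braid]

theorem free_quot {ι V : Type*} [AddCommGroup V] (b : Module.Basis ι ℤ V)
    (A : Set ι) : Module.Free ℤ (V ⧸ Submodule.span ℤ (b '' A)) := by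
  classical
  let φ : V →ₗ[ℤ] ({i // i ∈ Aᶜ} →₀ ℤ) :=
    (Finsupp.lsubtypeDomain Aᶜ).comp b.repr.toLinearMap
  have hk : LinearMap.ker φ = Submodule.span ℤ (b '' A) := by
    ext x
    rw [LinearMap.mem_ker, b.mem_span_image]
    constructor
    · intro h i hi
      by_contra hc
      have := DFunLike.congr_fun h (⟨i, hc⟩ : {i // i ∈ Aᶜ})
      rw [Finset.mem_coe, Finsupp.mem_support_iff] at hi
      exact hi this
    · intro h
      ext ⟨i, hi⟩
      by_contra hc
      exact hi (h (Finset.mem_coe.2 (Finsupp.mem_support_iff.2 hc)))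
  have hs : Function.Surjective φ := by
    intro y
    refine ⟨b.repr.symm (y.embDomain (Function.Embedding.subtype _)), ?_⟩
    ext i
    simp only [φ, LinearMap.comp_apply, LinearEquiv.coe_coe, LinearEquiv.apply_symm_apply]
    exact Finsupp.embDomain_apply_self (Function.Embedding.subtype _) y i
  rw [← hk]
  have e : (V ⧸ LinearMap.ker φ) ≃+ ({i // i ∈ Aᶜ} →₀ ℤ) :=
    LinearEquiv.toAddEquiv (φ.quotKerEquivOfSurjective hs)
  exact Module.Free.of_equiv e.symm.toIntLinearEquiv

theorem dw_mem (a k : ℕ) : ∀ i ∈ dw a k, a ≤ i ∧ i < a + k := by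
  induction k with
  | zero => simp [dw]
  | succ k ih =>
    intro i hi
    rw [dw, List.mem_cons] at hi
    rcases hi with rfl | hi
    · omega
    · have := ih i hi; omega

theorem NF_mem (m : ℕ) : ∀ w ∈ NF m, ∀ i ∈ w, 1 ≤ i ∧ i ≤ m := by
  induction m with
  | zero => intro w hw; simp [NF] at hw; simp [hw]
  | succ m ih =>
    rintro l ⟨w, hw, a, k, ha, hk, rfl⟩ i hi
    rw [List.mem_append] at hi
    rcases hi with hi | hi
    · have := ih w hw i hi; omega
    · have := dw_mem a k i hi; omega


section Abstract

variable {R : Type*} [Ring R] (Y : ℕ → R)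

theorem rep_word (m : ℕ) (rep : R →+* (Module.End ℤ M)ᵐᵒᵖ)
    (hrep : ∀ i, 1 ≤ i → i ≤ m → rep (Y i) = MulOpposite.op (T i))
    (l : List ℕ) (hl : ∀ i ∈ l, 1 ≤ i ∧ i ≤ m) (f : ℕ → ℕ)
    (h : asc l f) : (rep (P Y l)).unop (Finsupp.single f 1) =
      Finsupp.single (act l f) 1 := by
  induction l generalizing f with
  | nil => simp [P, act]
  | cons i l ih =>
    have hi := hl i (by simp)
    rw [P_cons, map_mul, hrep i hi.1 hi.2, MulOpposite.unop_mul, Module.End.mul_apply,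
      MulOpposite.unop_op, T_single, if_pos h.1]
    exact ih (fun j hj => hl j (by simp [hj])) _ h.2

/-- evaluation at the identity -/
noncomputable def ev (rep : R →+* (Module.End ℤ M)ᵐᵒᵖ) : R →+ M where
  toFun x := (rep x).unop (Finsupp.single id 1)
  map_zero' := by simp
  map_add' x y := by simp

theorem NF_li (m : ℕ) (rep : R →+* (Module.End ℤ M)ᵐᵒᵖ)
    (hrep : ∀ i, 1 ≤ i → i ≤ m → rep (Y i) = MulOpposite.op (T i)) :
    LinearIndependent ℤ (fun w : NF m => P Y w.1) := by
  apply LinearIndependent.of_comp (ev rep).toIntLinearMap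
  have : ((ev rep).toIntLinearMap ∘ fun w : NF m => P Y w.1) =
      (fun f : ℕ → ℕ => Finsupp.single f (1 : ℤ)) ∘ fun w : NF m => act w.1 id := by
    funext w
    exact rep_word Y m rep hrep w.1 (NF_mem m w.1 w.2) id (NF_good _ w.1 w.2).1
  rw [this]
  have h0 := (Finsupp.basisSingleOne (R := ℤ) (ι := ℕ → ℕ)).linearIndependent
  rw [Finsupp.coe_basisSingleOne] at h0
  exact h0.comp (fun w : NF m => act w.1 id)
    (fun w w' h => Subtype.ext (NF_inj _ w.1 w.2 w'.1 w'.2 h))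

/-- span of words of length at least `m` -/
noncomputable def K (m : ℕ) : Submodule ℤ R :=
  Submodule.span ℤ {x | ∃ l : List ℕ, m ≤ l.length ∧ x = P Y l}

/-- the augmentation ideal -/
noncomputable def J (m : ℕ) : Submodule ℤ R :=
  Submodule.span ℤ {a | ∃ (x y : R) (i : ℕ), 1 ≤ i ∧ i + 1 ≤ m ∧ a = x * Y i * y}

theorem K_mul (a b : ℕ) : K Y a * K Y b ≤ K Y (a + b) := by
  rw [K, K, Submodule.span_mul_span, Submodule.span_le]
  rintro _ ⟨_, ⟨l, hl, rfl⟩, _, ⟨l', hl', rfl⟩, rfl⟩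
  refine Submodule.subset_span ⟨l ++ l', by simp; omega, ?_⟩
  simp [P_append]

theorem K_zero (hgen : ∀ x, x ∈ Subring.closure (Set.range Y)) (x : R) : x ∈ K Y 0 := by
  have h1 : (1 : R) ∈ K Y 0 := Submodule.subset_span ⟨[], by simp, by simp [P]⟩
  induction hgen x using Subring.closure_induction with
  | mem x hx =>
    obtain ⟨i, rfl⟩ := hx
    exact Submodule.subset_span ⟨[i], by simp, by simp [P]⟩
  | zero => exact Submodule.zero_mem _
  | one => exact h1
  | add a b _ _ ha hb => exact Submodule.add_mem _ ha hb
  | neg a _ ha => exact Submodule.neg_mem _ ha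
  | mul a b _ _ ha hb => exact K_mul Y 0 0 (Submodule.mul_mem_mul ha hb)

theorem J_le
    (hgen : ∀ x, x ∈ Subring.closure (Set.range Y))
    (n : ℕ) : J Y n ≤ K Y 1 := by
  rw [J, Submodule.span_le]
  rintro _ ⟨x, y, i, h1, h2, rfl⟩
  have hi : Y i ∈ K Y 1 := Submodule.subset_span ⟨[i], by simp, by simp [P]⟩
  exact K_mul Y 1 0 (Submodule.mul_mem_mul
    (K_mul Y 0 1 (Submodule.mul_mem_mul (K_zero Y hgen x) hi)) (K_zero Y hgen y))

theorem Jpow_le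
    (hgen : ∀ x, x ∈ Subring.closure (Set.range Y))
    (n m : ℕ) : J Y n ^ m ≤ K Y m := by
  induction m with
  | zero => intro x _; exact K_zero Y hgen x
  | succ m ih =>
    rw [pow_succ]
    exact (mul_le_mul' ih (J_le Y hgen n)).trans (K_mul Y m 1)

theorem J_mul_mem
    (n : ℕ) (hz : ∀ i, ¬ (1 ≤ i ∧ i + 1 ≤ n) → Y i = 0)
    (i : ℕ) (y : R) : Y i * y ∈ J Y n := by
  by_cases h : 1 ≤ i ∧ i + 1 ≤ n
  · exact Submodule.subset_span ⟨1, y, i, h.1, h.2, by simp⟩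
  · rw [hz i h, zero_mul]; exact Submodule.zero_mem _

theorem word_mem_Jpow
    (n : ℕ) (hz : ∀ i, ¬ (1 ≤ i ∧ i + 1 ≤ n) → Y i = 0)
    (m : ℕ) (l : List ℕ) (h : m + 1 ≤ l.length) :
    P Y l ∈ J Y n ^ (m + 1) := by
  induction m generalizing l with
  | zero =>
    cases l with
    | nil => simp at h
    | cons i l => rw [zero_add, pow_one, P_cons]; exact J_mul_mem Y n hz i _
  | succ m ih =>
    cases l with
    | nil => simp at h
    | cons i l =>
      rw [pow_succ', P_cons]
      refine Submodule.mul_mem_mul ?_ (ih l (by simpa using h))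
      simpa using J_mul_mem Y n hz i 1

theorem Jpow_eq
    (hgen : ∀ x, x ∈ Subring.closure (Set.range Y))
    (n : ℕ) (hz : ∀ i, ¬ (1 ≤ i ∧ i + 1 ≤ n) → Y i = 0)
    (m : ℕ) : J Y n ^ (m + 1) = K Y (m + 1) := by
  refine le_antisymm (Jpow_le Y hgen n _) ?_
  rw [K, Submodule.span_le]
  rintro _ ⟨l, hl, rfl⟩
  exact word_mem_Jpow Y n hz m l hl

theorem K_eq
    (n : ℕ) (hz : ∀ i, ¬ (1 ≤ i ∧ i + 1 ≤ n) → Y i = 0)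
    (hsq : ∀ i, Y i * Y i = 0)
    (hbr : ∀ i, Y i * Y (i + 1) * Y i = Y (i + 1) * Y i * Y (i + 1))
    (hco : ∀ i j, i + 2 ≤ j → Y i * Y j = Y j * Y i)
    (m : ℕ) : K Y m = Submodule.span ℤ
    ((fun w : NF (n - 1) => P Y w.1) '' {w | m ≤ w.1.length}) := by
  apply le_antisymm
  · rw [K, Submodule.span_le]
    rintro _ ⟨l, hl, rfl⟩
    rcases word_NF Y hsq hbr hco (n - 1) (fun i hi => hz i (by omega)) l with
      h | ⟨w, hw, he, hl'⟩
    · rw [h]; exact Submodule.zero_mem _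
    · rw [← he]
      exact Submodule.subset_span ⟨⟨w, hw⟩, by simpa [hl'] using hl, rfl⟩
  · rw [Submodule.span_le]
    rintro _ ⟨w, hw, rfl⟩
    exact Submodule.subset_span ⟨w.1, hw, rfl⟩

theorem main
    (hgen : ∀ x, x ∈ Subring.closure (Set.range Y))
    (n : ℕ) (hz : ∀ i, ¬ (1 ≤ i ∧ i + 1 ≤ n) → Y i = 0)
    (hsq : ∀ i, Y i * Y i = 0)
    (hbr : ∀ i, Y i * Y (i + 1) * Y i = Y (i + 1) * Y i * Y (i + 1))
    (hco : ∀ i j, i + 2 ≤ j → Y i * Y j = Y j * Y i)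
    (hn : 2 ≤ n) (rep : R →+* (Module.End ℤ M)ᵐᵒᵖ)
    (hrep : ∀ i, 1 ≤ i → i ≤ n - 1 → rep (Y i) = MulOpposite.op (T i)) :
    J Y n ^ (n * (n - 1) / 2 + 1) = ⊥ ∧
    ∀ m : ℕ, Module.Free ℤ (R ⧸ (J Y n ^ m)) := by
  have hK := K_eq Y n hz hsq hbr hco
  constructor
  · rw [Jpow_eq Y hgen n hz, hK, Submodule.span_eq_bot]
    rintro _ ⟨w, hw, rfl⟩
    exfalso
    have h1 := NF_length _ w.1 w.2
    have h2 : n - 1 + 1 = n := by omega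
    rw [h2] at h1
    have h3 : n * (n - 1) / 2 + 1 ≤ w.1.length := hw
    omega
  · let b : Module.Basis (NF (n - 1)) ℤ R := Module.Basis.mk (NF_li Y (n - 1) rep hrep) (by
      intro x _
      have := K_zero Y hgen x
      rw [hK] at this
      exact Submodule.span_mono (Set.image_subset_range _ _) this)
    have hb : (b : NF (n - 1) → R) = fun w => P Y w.1 := Module.Basis.coe_mk _ _
    intro m
    cases m with
    | zero =>
      have : J Y n ^ 0 = Submodule.span ℤ (b '' {⟨[], NF_nil (n - 1)⟩}) := by
        rw [pow_zero, Set.image_singleton, hb, Submodule.one_eq_span]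
        simp [P]
      rw [this]
      exact free_quot _ _
    | succ m =>
      rw [Jpow_eq Y hgen n hz, hK, ← hb]
      exact free_quot _ _

end Abstract

/-- the representation -/
noncomputable def repF (n : ℕ) : FreeAlgebra ℤ (NIdx n) →ₐ[ℤ] (Module.End ℤ M)ᵐᵒᵖ :=
  FreeAlgebra.lift ℤ (fun i : NIdx n => MulOpposite.op (T i.1))

theorem repF_rel (n : ℕ) ⦃x y : FreeAlgebra ℤ (NIdx n)⦄ (h : NRel n x y) :
    (repF n : FreeAlgebra ℤ (NIdx n) →+* (Module.End ℤ M)ᵐᵒᵖ) x = (repF n : FreeAlgebra ℤ (NIdx n) →+* (Module.End ℤ M)ᵐᵒᵖ) y := by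
  cases h with
  | sq i => simp [repF, ← MulOpposite.op_mul, T_sq]
  | braid i j h =>
    simp only [repF, RingHom.coe_coe, map_mul, FreeAlgebra.lift_ι_apply, ← MulOpposite.op_mul, h,
      ← mul_assoc, T_braid]
  | comm i j h =>
    simp only [repF, RingHom.coe_coe, map_mul, FreeAlgebra.lift_ι_apply, ← MulOpposite.op_mul]
    rcases h with h | h
    · rw [T_comm _ _ h]
    · rw [T_comm _ _ h]

/-- the representation of the quotient -/
noncomputable def rep (n : ℕ) : Nring n →+* (Module.End ℤ M)ᵐᵒᵖ :=
  RingQuot.lift ⟨(repF n : FreeAlgebra ℤ (NIdx n) →+* (Module.End ℤ M)ᵐᵒᵖ), repF_rel n⟩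

theorem rep_Y (n i : ℕ) (h : 1 ≤ i ∧ i + 1 ≤ n) :
    rep n (Ygen n i) = MulOpposite.op (T i) := by
  rw [rep, Ygen, RingQuot.lift_mkRingHom_apply, Yf, dif_pos h]
  simp [repF]

theorem Y_zero (n i : ℕ) (h : ¬ (1 ≤ i ∧ i + 1 ≤ n)) : Ygen n i = 0 := by
  rw [Ygen, Yf, dif_neg h, map_zero]

theorem Y_eq (n i : ℕ) (h : 1 ≤ i ∧ i + 1 ≤ n) :
    Ygen n i = RingQuot.mkRingHom (NRel n) (FreeAlgebra.ι ℤ ⟨i, h⟩) := by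
  rw [Ygen, Yf, dif_pos h]

theorem Y_sq (n i : ℕ) : Ygen n i * Ygen n i = 0 := by
  by_cases h : 1 ≤ i ∧ i + 1 ≤ n
  · rw [Y_eq n i h, ← map_mul, RingQuot.mkRingHom_rel (NRel.sq _), map_zero]
  · rw [Y_zero n i h, mul_zero]

theorem Y_braid (n i : ℕ) : Ygen n i * Ygen n (i + 1) * Ygen n i =
    Ygen n (i + 1) * Ygen n i * Ygen n (i + 1) := by
  by_cases h : 1 ≤ i ∧ i + 1 ≤ n
  · by_cases h' : 1 ≤ i + 1 ∧ i + 1 + 1 ≤ n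
    · rw [Y_eq n i h, Y_eq n _ h', ← map_mul, ← map_mul, ← map_mul, ← map_mul,
        RingQuot.mkRingHom_rel (NRel.braid _ _ rfl)]
    · rw [Y_zero n _ h']; simp
  · rw [Y_zero n i h]; simp

theorem Y_comm (n i j : ℕ) (hij : i + 2 ≤ j) : Ygen n i * Ygen n j = Ygen n j * Ygen n i := by
  by_cases h : 1 ≤ i ∧ i + 1 ≤ n
  · by_cases h' : 1 ≤ j ∧ j + 1 ≤ n
    · rw [Y_eq n i h, Y_eq n _ h', ← map_mul, ← map_mul,
        RingQuot.mkRingHom_rel (NRel.comm _ _ (Or.inl hij))]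
    · rw [Y_zero n _ h']; simp
  · rw [Y_zero n i h]; simp

theorem Y_gen (n : ℕ) (x : Nring n) : x ∈ Subring.closure (Set.range (Ygen n)) := by
  obtain ⟨y, rfl⟩ := RingQuot.mkRingHom_surjective (NRel n) x
  induction y using FreeAlgebra.induction with
  | grade0 r =>
    rw [eq_intCast (algebraMap ℤ (FreeAlgebra ℤ (NIdx n))) r, map_intCast]
    exact intCast_mem _ r
  | grade1 i => exact Subring.subset_closure ⟨i.1, Y_eq n i.1 i.2⟩
  | mul a b ha hb => rw [map_mul]; exact mul_mem ha hb
  | add a b ha hb => rw [map_add]; exact add_mem ha hb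

end NilCox

/-- `J^{n(n-1)/2 + 1} = 0`, and every quotient `N(n)/J^m` is a free
ℤ-module. -/
theorem Nring_augmentation_ideal_nilpotent_and_quotients_free (n : ℕ) (hn : 2 ≤ n) :
    Jaug n ^ (n * (n - 1) / 2 + 1) = ⊥ ∧
    ∀ m : ℕ, Module.Free ℤ (Nring n ⧸ (Jaug n ^ m)) := by
  exact NilCox.main (Ygen n) (NilCox.Y_gen n) n (NilCox.Y_zero n) (NilCox.Y_sq n)
    (NilCox.Y_braid n) (NilCox.Y_comm n) hn (NilCox.rep n)
    (fun i h1 h2 => NilCox.rep_Y n i ⟨h1, by omega⟩)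
end

section
/- In N(n), suppose 1 ≤ i < j ≤ n and i ≤ i' < j' ≤ n. Then: Y_{[i',j']} Y_{[i,j]} = Y_{[i,j']} if j = i'; Y_{[i',j']} Y_{[i,j]} = Y_{[i,j]} Y_{[i',j']} if j < i'; Y_{[i',j']} Y_{[i,j]} = Y_{[i,j]} Y_{[i'+1,j'+1]} if j > j'; and Y_{[i',j']} Y_{[i,j]} = 0 if j' ≥ j > i'. -/
theorem Ygen_of_not {n i : ℕ} (h : ¬ (1 ≤ i ∧ i + 1 ≤ n)) : Ygen n i = 0 := by
  unfold Ygen Yf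
  rw [dif_neg h, map_zero]

theorem Ygen_of {n i : ℕ} (h : 1 ≤ i ∧ i + 1 ≤ n) :
    Ygen n i = RingQuot.mkRingHom (NRel n) (FreeAlgebra.ι ℤ ⟨i, h⟩) := by
  unfold Ygen Yf
  rw [dif_pos h]

theorem Ygen_sq (n i : ℕ) : Ygen n i * Ygen n i = 0 := by
  by_cases h : 1 ≤ i ∧ i + 1 ≤ n
  · rw [Ygen_of h, ← map_mul, RingQuot.mkRingHom_rel (NRel.sq ⟨i, h⟩), map_zero]
  · rw [Ygen_of_not h, zero_mul]

theorem Ygen_comm (n i j : ℕ) (hij : i + 2 ≤ j ∨ j + 2 ≤ i) :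
    Commute (Ygen n i) (Ygen n j) := by
  by_cases h : 1 ≤ i ∧ i + 1 ≤ n
  · by_cases h' : 1 ≤ j ∧ j + 1 ≤ n
    · unfold Commute SemiconjBy
      rw [Ygen_of h, Ygen_of h', ← map_mul, ← map_mul,
        RingQuot.mkRingHom_rel (NRel.comm ⟨i, h⟩ ⟨j, h'⟩ hij)]
    · rw [Ygen_of_not h']; exact Commute.zero_right _
  · rw [Ygen_of_not h]; exact Commute.zero_left _

theorem Ygen_braid (n i : ℕ) :
    Ygen n i * Ygen n (i + 1) * Ygen n i = Ygen n (i + 1) * Ygen n i * Ygen n (i + 1) := by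
  by_cases h : 1 ≤ i ∧ i + 1 ≤ n
  · by_cases h' : 1 ≤ i + 1 ∧ i + 1 + 1 ≤ n
    · rw [Ygen_of h, Ygen_of h']
      simp only [← map_mul]
      rw [RingQuot.mkRingHom_rel (NRel.braid ⟨i, h⟩ ⟨i + 1, h'⟩ rfl)]
    · rw [Ygen_of_not h']; simp
  · rw [Ygen_of_not h]; simp

theorem Yint_self (n i : ℕ) : Yint n i i = 1 := by simp [Yint]

theorem Yint_one (n i : ℕ) : Yint n i (i + 1) = Ygen n i := by simp [Yint]

theorem Yint_split (n : ℕ) {i k j : ℕ} (h : i ≤ k) (h' : k ≤ j) :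
    Yint n k j * Yint n i k = Yint n i j := by
  obtain ⟨a, rfl⟩ := Nat.exists_eq_add_of_le h
  obtain ⟨b, rfl⟩ := Nat.exists_eq_add_of_le h'
  unfold Yint
  rw [← List.prod_append, ← List.map_append, ← List.reverse_append]
  have e : i + a + b - i = a + b := by omega
  rw [e, Nat.add_sub_cancel_left, Nat.add_sub_cancel_left, List.range'_append_1]

theorem Yint_succ (n : ℕ) {i j : ℕ} (h : i ≤ j) :
    Yint n i (j + 1) = Ygen n j * Yint n i j := by
  rw [← Yint_split n h (Nat.le_succ j), Nat.succ_eq_add_one, Yint_one]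

theorem Yint_commute (n : ℕ) (x : Nring n) (i j : ℕ)
    (hx : ∀ b, i ≤ b → b < j → Commute x (Ygen n b)) : Commute x (Yint n i j) := by
  unfold Yint
  apply Commute.list_prod_right
  intro y hy
  simp only [List.mem_map, List.mem_reverse, List.mem_range'_1] at hy
  obtain ⟨b, hb, rfl⟩ := hy
  exact hx b hb.1 (by omega)

/-- Moving one generator through an interval shifts it by one. -/
theorem Ygen_mul_Yint (n : ℕ) {i j a : ℕ} (h : i ≤ a) (h' : a + 1 < j) :
    Ygen n a * Yint n i j = Yint n i j * Ygen n (a + 1) := by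
  have e : Yint n i j = Yint n (a + 2) j * (Ygen n (a + 1) * (Ygen n a * Yint n i a)) := by
    rw [← Yint_succ n h, ← Yint_succ n (by omega : i ≤ a + 1)]
    exact (Yint_split n (by omega) (by omega)).symm
  have c1 : Commute (Ygen n a) (Yint n (a + 2) j) :=
    Yint_commute n _ _ _ fun b hb _ => Ygen_comm n a b (by omega)
  have c2 : Commute (Ygen n (a + 1)) (Yint n i a) :=
    Yint_commute n _ _ _ fun b _ hb => Ygen_comm n (a + 1) b (by omega)
  have br := Ygen_braid n a
  rw [e, ← mul_assoc, c1.eq]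
  simp only [mul_assoc]
  rw [← c2.eq]
  congr 1
  simp only [← mul_assoc]
  rw [br]

theorem Yint_shift (n : ℕ) {i j i' : ℕ} (h : i ≤ i') (j' : ℕ) (h5 : i' ≤ j') (hj : j' < j) :
    Yint n i' j' * Yint n i j = Yint n i j * Yint n (i' + 1) (j' + 1) := by
  induction j', h5 using Nat.le_induction with
  | base => simp [Yint_self]
  | succ m hm ih =>
    rw [Yint_succ n hm, Yint_succ n (by omega : i' + 1 ≤ m + 1), mul_assoc, ih (by omega),
      ← mul_assoc, Ygen_mul_Yint n (by omega) hj, mul_assoc]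

/-- Products of the elements `Y_{[i,j]}` in `N(n)`: for `1 ≤ i < j ≤ n` and
`i ≤ i' < j' ≤ n`, the product `Y_{[i',j']} Y_{[i,j]}` equals `Y_{[i,j']}` if `j = i'`;
`Y_{[i,j]} Y_{[i',j']}` if `j < i'`; `Y_{[i,j]} Y_{[i'+1,j'+1]}` if `j > j'`; and `0` if
`j' ≥ j > i'`. -/
theorem Yint_mul_Yint (n : ℕ) (hn : 2 ≤ n) (i j i' j' : ℕ)
    (h1 : 1 ≤ i) (h2 : i < j) (h3 : j ≤ n)
    (h4 : i ≤ i') (h5 : i' < j') (h6 : j' ≤ n) :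
    (j = i' → Yint n i' j' * Yint n i j = Yint n i j') ∧
    (j < i' → Yint n i' j' * Yint n i j = Yint n i j * Yint n i' j') ∧
    (j > j' → Yint n i' j' * Yint n i j = Yint n i j * Yint n (i' + 1) (j' + 1)) ∧
    (j' ≥ j → j > i' → Yint n i' j' * Yint n i j = 0) := by
  refine ⟨?_, ?_, ?_, ?_⟩
  · rintro rfl
    exact Yint_split n h2.le h5.le
  · intro h
    refine (Yint_commute n _ _ _ fun b _ hb => ?_).eq
    refine (Yint_commute n _ _ _ fun c hc _ => ?_).symm
    exact Ygen_comm n b c (by omega)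
  · intro h
    exact Yint_shift n h4 j' h5.le h
  · intro h h'
    obtain ⟨m, rfl⟩ : ∃ m, j = m + 1 := ⟨j - 1, by omega⟩
    have z : Ygen n m * Yint n i (m + 1) = 0 := by
      rw [Yint_succ n (by omega), ← mul_assoc, Ygen_sq, zero_mul]
    rw [← Yint_split n h'.le h, Yint_succ n (by omega : i' ≤ m), mul_assoc, mul_assoc,
      Yint_shift n h4 m (by omega) (by omega), ← mul_assoc (Ygen n m), z, zero_mul, mul_zero]
end
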